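/- For every real number α with 0 ≤ α ≤ 1 there exist constants c₁, c₂, C > 0 such that for every sufficiently large integer n there exists a set S of n points in general position in the plane satisfying c₁·n^{3−α} ≤ τ(S) ≤ c₂·n^{3−α}, and every point q of the plane stabs at most C·n^{3−2α} empty triangles of S. -/

import Mathlib

open scoped Classical

noncomputable section

/-- Euclidean distance between two points of the plane `ℝ × ℝ`. -/
def elen (p q : ℝ × ℝ) : ℝ := Real.sqrt ((p.1 - q.1) ^ 2 + (p.2 - q.2) ^ 2)

/-- Orientation determinant of an ordered triple of points. -/
def orient (a b c : ℝ × ℝ) : ℝ :=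
  (b.1 - a.1) * (c.2 - a.2) - (b.2 - a.2) * (c.1 - a.1)

/-- A planar point set is in general position if no three distinct points are collinear. -/
def GeneralPosition (S : Set (ℝ × ℝ)) : Prop :=
  ∀ a ∈ S, ∀ b ∈ S, ∀ c ∈ S, a ≠ b → a ≠ c → b ≠ c →
    ¬ Collinear ℝ ({a, b, c} : Set (ℝ × ℝ))

/-- No two points of `S` share an `x`-coordinate. -/
def DistinctX (S : Set (ℝ × ℝ)) : Prop :=
  ∀ a ∈ S, ∀ b ∈ S, a ≠ b → a.1 ≠ b.1

/-- `p` lies strictly below the (non-vertical) line through `a` and `b`, where `a.1 < b.1`. -/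
def StrictlyBelow (p a b : ℝ × ℝ) : Prop :=
  (b.1 - a.1) * (p.2 - a.2) < (b.2 - a.2) * (p.1 - a.1)

/-- `p` lies strictly above the (non-vertical) line through `a` and `b`, where `a.1 < b.1`. -/
def StrictlyAbove (p a b : ℝ × ℝ) : Prop :=
  (b.2 - a.2) * (p.1 - a.1) < (b.1 - a.1) * (p.2 - a.2)

/-- `Y` is high above `X`: every line through two points of `Y` is above every point of `X`. -/
def HighAbove (Y X : Set (ℝ × ℝ)) : Prop :=
  ∀ a ∈ Y, ∀ b ∈ Y, a.1 < b.1 → ∀ p ∈ X, StrictlyBelow p a b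

/-- `X` is deep below `Y`: every line through two points of `X` is below every point of `Y`. -/
def DeepBelow (X Y : Set (ℝ × ℝ)) : Prop :=
  ∀ a ∈ X, ∀ b ∈ X, a.1 < b.1 → ∀ p ∈ Y, StrictlyAbove p a b

/-- The even-indexed points of `H` in increasing order of `x`-coordinate (`H₀`). -/
def evenPart (H : Finset (ℝ × ℝ)) : Finset (ℝ × ℝ) :=
  H.filter fun p => Even (H.filter fun q => q.1 < p.1).card

/-- The odd-indexed points of `H` in increasing order of `x`-coordinate (`H₁`). -/
def oddPart (H : Finset (ℝ × ℝ)) : Finset (ℝ × ℝ) :=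
  H.filter fun p => ¬ Even (H.filter fun q => q.1 < p.1).card

/-- Horton sets. -/
inductive IsHorton : Finset (ℝ × ℝ) → Prop
  | small (H : Finset (ℝ × ℝ)) (hgp : GeneralPosition ↑H) (hx : DistinctX ↑H)
      (hcard : H.card ≤ 2) : IsHorton H
  | split (H : Finset (ℝ × ℝ)) (hgp : GeneralPosition ↑H) (hx : DistinctX ↑H)
      (hcard : 2 < H.card) (h0 : IsHorton (evenPart H)) (h1 : IsHorton (oddPart H))
      (hhigh : HighAbove ↑(oddPart H) ↑(evenPart H))
      (hdeep : DeepBelow ↑(evenPart H) ↑(oddPart H)) : IsHorton H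

/-- `t` is an empty triangle of the point set `S`: a three-element non-collinear subset of `S`
whose open interior contains no point of `S`. -/
def IsEmptyTriangleOf (S : Set (ℝ × ℝ)) (t : Finset (ℝ × ℝ)) : Prop :=
  t.card = 3 ∧ (↑t : Set (ℝ × ℝ)) ⊆ S ∧ ¬ Collinear ℝ (↑t : Set (ℝ × ℝ)) ∧
    ∀ p ∈ S, p ∉ interior (convexHull ℝ (↑t : Set (ℝ × ℝ)))

/-- `τ S`: the number of empty triangles of `S`. -/
def tau (S : Set (ℝ × ℝ)) : ℕ :=
  {t : Finset (ℝ × ℝ) | IsEmptyTriangleOf S t}.ncard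

/-- The number of empty triangles of `S` stabbed by the point `q`. -/
def stabbedCount (S : Set (ℝ × ℝ)) (q : ℝ × ℝ) : ℕ :=
  {t : Finset (ℝ × ℝ) | IsEmptyTriangleOf S t ∧
    q ∈ interior (convexHull ℝ (↑t : Set (ℝ × ℝ)))}.ncard

/-- The number of empty triangles of `S` having `q` as a vertex. -/
def incidentCount (S : Set (ℝ × ℝ)) (q : ℝ × ℝ) : ℕ :=
  {t : Finset (ℝ × ℝ) | IsEmptyTriangleOf S t ∧ q ∈ t}.ncard

/-!
Blow up each of the `m = 4 ^ K` points of a `2 ^ K × 2 ^ K` square lattice, with `m ≈ n ^ α`, to a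
cluster of `k ≈ n / m` points: first perturb the lattice to a squared Horton set, so that collinear
lattice points become Horton sets, then replace each point by a tiny concave chain whose direction
is close to `(2 ^ K, 1)`, a direction occurring between no two lattice points.

An empty triangle with vertices in three different clusters is thin: up to the order of its
vertices, its apex has lattice distance at most `2` from the line of its base, for otherwise the
triangle below it contains a further lattice point. By the Horton property its base consists of
`2 ^ w` lattice steps, and a given point of the plane is in at most two such triangles with given
base direction, apex and `w`. There are `O(4 ^ j)` base directions of norm about `2 ^ j`, each
leaving `O(2 ^ (K - j))` apexes near the point and `O((K - j) ^ 2)` choices of `w` and of the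
position of the apex, and these numbers add up to `O(4 ^ K) = O(m)`.

Empty triangles with two vertices in a common cluster have, for fixed labels and a fixed apex,
disjoint interiors, so again `O(m)` of them are stabbed. With the `O(k ^ 3)` choices of labels,
every point stabs `O(m * k ^ 3) = O(n ^ 3 / m ^ 2)` empty triangles, and letting the point run over
representatives of the `m` clusters bounds their total number by `O(m ^ 2 * k ^ 3) = O(n ^ 3 / m)`.
Conversely, two points of a cluster and a point of a lower cluster always span an empty triangle,
and there are `Ω(m ^ 2 * k ^ 3)` such triples.
-/

section Orientation

variable {a b c p q x y x' y' : ℝ × ℝ} {σ : ℝ}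

lemma orient_rotate (a b c : ℝ × ℝ) : orient b c a = orient a b c := by
  simp only [orient]; ring

lemma orient_swap (a b c : ℝ × ℝ) : orient b a c = -orient a b c := by
  simp only [orient]; ring

lemma orient_swap_right (a b c : ℝ × ℝ) : orient a c b = -orient a b c := by
  simp only [orient]; ring

lemma orient_reverse (a b c : ℝ × ℝ) : orient c b a = -orient a b c := by
  simp only [orient]; ring

lemma orient_self_right (a b : ℝ × ℝ) : orient a b b = 0 := by
  simp only [orient]; ring

lemma orient_self_left (a b : ℝ × ℝ) : orient a b a = 0 := by
  simp only [orient]; ring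

lemma orient_self_self (a b : ℝ × ℝ) : orient a a b = 0 := by
  simp only [orient]; ring

lemma orient_smul_add_smul_add_smul {u v w : ℝ} (h : u + v + w = 1) (a b x y z : ℝ × ℝ) :
    orient a b (u • x + v • y + w • z) =
      u * orient a b x + v * orient a b y + w * orient a b z := by
  obtain rfl : u = 1 - v - w := by linarith
  simp only [orient, Prod.fst_add, Prod.snd_add, Prod.smul_fst, Prod.smul_snd, smul_eq_mul]
  ring

lemma orient_eq_zero_of_collinear (h : Collinear ℝ {a, b, c}) : orient a b c = 0 := by
  obtain ⟨v, hv⟩ := (collinear_iff_of_mem (p₀ := a) (by simp)).1 h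
  obtain ⟨r, rfl⟩ := hv b (by simp)
  obtain ⟨s, rfl⟩ := hv c (by simp)
  simp only [orient, vadd_eq_add, Prod.fst_add, Prod.snd_add, Prod.smul_fst, Prod.smul_snd,
    smul_eq_mul]
  ring

lemma eq_of_orient_eq_zero (h : orient x y c ≠ 0) (hx : orient y c q = 0)
    (hy : orient c x q = 0) : q = c := by
  have h₁ : orient x y c * (q.1 - c.1) =
      orient y c q * (x.1 - c.1) + orient c x q * (y.1 - c.1) := by
    simp only [orient]; ring
  have h₂ : orient x y c * (q.2 - c.2) =
      orient y c q * (x.2 - c.2) + orient c x q * (y.2 - c.2) := by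
    simp only [orient]; ring
  ext
  · simpa [hx, hy, h, sub_eq_zero] using h₁
  · simpa [hx, hy, h, sub_eq_zero] using h₂

/-- `p` lies in the interior of the triangle `abc`: it is strictly on the same side of each edge
as the opposite vertex. Multiplying by `orient a b c` makes the notion independent of the
orientation of the triangle. -/
def StrictlyInside (a b c p : ℝ × ℝ) : Prop :=
  0 < orient a b c * orient a b p ∧ 0 < orient a b c * orient b c p ∧
    0 < orient a b c * orient c a p

/-- `p` lies in the closed triangle `abc`. -/
def WeaklyInside (a b c p : ℝ × ℝ) : Prop :=
  0 ≤ orient a b c * orient a b p ∧ 0 ≤ orient a b c * orient b c p ∧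
    0 ≤ orient a b c * orient c a p

lemma StrictlyInside.rotate (h : StrictlyInside a b c p) : StrictlyInside b c a p := by
  rw [StrictlyInside, orient_rotate a b c]
  exact ⟨h.2.1, h.2.2, h.1⟩

lemma StrictlyInside.swap (h : StrictlyInside a b c p) : StrictlyInside b a c p := by
  rw [StrictlyInside, orient_swap a b c, orient_swap a b p, orient_swap c a p, orient_swap b c p]
  simpa only [neg_mul_neg] using ⟨h.1, h.2.2, h.2.1⟩

lemma WeaklyInside.rotate (h : WeaklyInside a b c p) : WeaklyInside b c a p := by
  rw [WeaklyInside, orient_rotate a b c]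
  exact ⟨h.2.1, h.2.2, h.1⟩

lemma WeaklyInside.swap (h : WeaklyInside a b c p) : WeaklyInside b a c p := by
  rw [WeaklyInside, orient_swap a b c, orient_swap a b p, orient_swap c a p, orient_swap b c p]
  simpa only [neg_mul_neg] using ⟨h.1, h.2.2, h.2.1⟩

lemma weaklyInside_vertex (a b c : ℝ × ℝ) : WeaklyInside a b c a := by
  simp only [WeaklyInside, orient_self_left, orient_self_right, orient_rotate a b c, mul_zero,
    le_refl, true_and, and_true]
  exact mul_self_nonneg _

/-- The vertices of a nondegenerate triangle, as an affine basis of the plane. -/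
def triangleBasis (h : orient a b c ≠ 0) : AffineBasis (Fin 3) ℝ (ℝ × ℝ) where
  toFun := ![a, b, c]
  ind' := affineIndependent_iff_not_collinear_set.2 fun hc => h (orient_eq_zero_of_collinear hc)
  tot' := by
    have hi : AffineIndependent ℝ ![a, b, c] :=
      affineIndependent_iff_not_collinear_set.2 fun hc => h (orient_eq_zero_of_collinear hc)
    rw [hi.affineSpan_eq_top_iff_card_eq_finrank_add_one]
    simp

lemma range_triangleBasis (h : orient a b c ≠ 0) :
    Set.range (triangleBasis h) = {a, b, c} := by
  change Set.range ![a, b, c] = _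
  simp only [Matrix.range_cons, Matrix.range_empty, Set.union_empty, Set.singleton_union]

lemma orient_eq_triangleBasis_coord_mul (h : orient a b c ≠ 0) (p : ℝ × ℝ) :
    orient b c p = (triangleBasis h).coord 0 p * orient a b c ∧
      orient c a p = (triangleBasis h).coord 1 p * orient a b c ∧
      orient a b p = (triangleBasis h).coord 2 p * orient a b c := by
  have hsum := (triangleBasis h).sum_coord_apply_eq_one p
  have hp := (triangleBasis h).linear_combination_coord_eq_self p
  rw [Fin.sum_univ_three] at hsum hp
  change _ • a + _ • b + _ • c = p at hp
  have key := fun d e => orient_smul_add_smul_add_smul hsum d e a b c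
  rw [hp] at key
  simp only [key, orient_self_left, orient_self_right, orient_rotate a b c, ← orient_rotate c a b]
  exact ⟨by ring, by ring, by ring⟩

lemma mem_interior_convexHull_triangle (h : orient a b c ≠ 0) :
    p ∈ interior (convexHull ℝ {a, b, c}) ↔ StrictlyInside a b c p := by
  have hpos (t : ℝ) : 0 < orient a b c * (t * orient a b c) ↔ 0 < t := by
    rw [mul_left_comm, mul_pos_iff_of_pos_right (mul_self_pos.2 h)]
  obtain ⟨h₀, h₁, h₂⟩ := orient_eq_triangleBasis_coord_mul h p
  rw [← range_triangleBasis h, AffineBasis.interior_convexHull, StrictlyInside, h₀, h₁, h₂]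
  simp only [hpos, Set.mem_ofPred_eq, Fin.forall_fin_succ, Fin.succ_zero_eq_one,
    Fin.succ_one_eq_two, IsEmpty.forall_iff, and_true]
  tauto

lemma mem_convexHull_triangle (h : orient a b c ≠ 0) :
    p ∈ convexHull ℝ {a, b, c} ↔ WeaklyInside a b c p := by
  have hnonneg (t : ℝ) : 0 ≤ orient a b c * (t * orient a b c) ↔ 0 ≤ t := by
    rw [mul_left_comm, mul_nonneg_iff_of_pos_right (mul_self_pos.2 h)]
  obtain ⟨h₀, h₁, h₂⟩ := orient_eq_triangleBasis_coord_mul h p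
  rw [← range_triangleBasis h, AffineBasis.convexHull_eq_nonneg_coord, WeaklyInside, h₀, h₁, h₂]
  simp only [hnonneg, Set.mem_ofPred_eq, Fin.forall_fin_succ, Fin.succ_zero_eq_one,
    Fin.succ_one_eq_two, IsEmpty.forall_iff, and_true]
  tauto

lemma orient_pos_of_weaklyInside (h : orient x y c ≠ 0) (hq : WeaklyInside x y c q) (hqc : q ≠ c)
    (hx : 0 < σ * orient x p c) (hy : 0 < σ * orient y p c) : 0 < σ * orient q p c := by
  have combination : orient x y c * (orient x y c * (σ * orient q p c)) =
      orient x y c * orient y c q * (σ * orient x p c) +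
        orient x y c * orient c x q * (σ * orient y p c) := by
    simp only [orient]; ring
  obtain ⟨-, hα, hβ⟩ := hq
  have hne : orient x y c * orient y c q ≠ 0 ∨ orient x y c * orient c x q ≠ 0 := by
    by_contra! h0
    simp only [mul_eq_zero, h, false_or] at h0
    exact hqc (eq_of_orient_eq_zero h h0.1 h0.2)
  have hpos : 0 < orient x y c * (orient x y c * (σ * orient q p c)) := by
    rw [combination]
    rcases hne with h0 | h0
    · have := h0.symm.lt_of_le hα
      positivity
    · have := h0.symm.lt_of_le hβ
      positivity
  rw [← mul_assoc] at hpos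
  exact pos_of_mul_pos_right hpos (mul_self_nonneg _)

lemma eq_apex_of_weaklyInside_of_separated (h : orient x y c ≠ 0) (h' : orient x' y' c ≠ 0)
    (hq : WeaklyInside x y c q) (hq' : WeaklyInside x' y' c q)
    (hxx : 0 < σ * orient x x' c) (hxy : 0 < σ * orient x y' c)
    (hyx : 0 < σ * orient y x' c) (hyy : 0 < σ * orient y y' c) : q = c := by
  by_contra hqc
  have hx' := orient_pos_of_weaklyInside h hq hqc hxx hyx
  have hy' := orient_pos_of_weaklyInside h hq hqc hxy hyy
  rw [orient_swap, mul_neg, ← neg_mul] at hx' hy'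
  have := orient_pos_of_weaklyInside h' hq' hqc hx' hy'
  simp [orient_self_self] at this

end Orientation

section Permutations

variable {α β : Type*} {p q : α → α → α → Prop} {a b c : α}

/-- The closure of a ternary relation under permutations of its arguments: `UpToPerm q a b c`
says that `q` holds of `a`, `b`, `c` in some order. -/
inductive UpToPerm (q : α → α → α → Prop) : α → α → α → Prop
  | of {a b c : α} (h : q a b c) : UpToPerm q a b c
  | rotate {a b c : α} (h : UpToPerm q a b c) : UpToPerm q b c a
  | swap {a b c : α} (h : UpToPerm q a b c) : UpToPerm q b a c

namespace UpToPerm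

lemma map {r : β → β → β → Prop} (f : α → β)
    (hqr : ∀ a b c, q a b c → UpToPerm r (f a) (f b) (f c)) (h : UpToPerm q a b c) :
    UpToPerm r (f a) (f b) (f c) := by
  induction h with
  | of h => exact hqr _ _ _ h
  | rotate _ ih => exact ih.rotate
  | swap _ ih => exact ih.swap

lemma exists_of_invariant (hrotate : ∀ a b c, p a b c → p b c a)
    (hswap : ∀ a b c, p a b c → p b a c) (h : UpToPerm q a b c) (hp : p a b c) :
    ∃ a b c, p a b c ∧ q a b c := by
  induction h with
  | of h => exact ⟨_, _, _, hp, h⟩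
  | rotate _ ih => exact ih (hrotate _ _ _ (hrotate _ _ _ hp))
  | swap _ ih => exact ih (hswap _ _ _ hp)

end UpToPerm

end Permutations

section BinaryDigits

open Filter Topology

/-- In binary, `x` and `y` agree in the digits of weight less than `2 ^ (f + 1)`, while `z` first
differs from them in the digit of weight `2 ^ f`. -/
def SplitsOffAt (f : ℕ) (x y z : ℤ) : Prop :=
  (2 : ℤ) ^ (f + 1) ∣ y - x ∧ ∃ r, Odd r ∧ z - x = 2 ^ f * r

lemma exists_eq_two_pow_mul_odd_int {n : ℤ} (hn : n ≠ 0) :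
    ∃ (f : ℕ) (r : ℤ), Odd r ∧ n = 2 ^ f * r := by
  obtain ⟨r, h, hr⟩ :=
    (Int.finiteMultiplicity_iff.2 ⟨by norm_num, hn⟩ :
      FiniteMultiplicity 2 n).exists_eq_pow_mul_and_not_dvd
  exact ⟨_, r, by rwa [← Int.not_even_iff_odd, even_iff_two_dvd], h⟩

lemma SplitsOffAt.symm {f : ℕ} {x y z : ℤ} (h : SplitsOffAt f x y z) : SplitsOffAt f y x z := by
  obtain ⟨⟨w, hw⟩, r, hr, hz⟩ := h
  refine ⟨⟨-w, by linarith⟩, r - 2 * w, hr.sub_even (even_two_mul w), ?_⟩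
  rw [pow_succ] at hw
  linarith

lemma upToPerm_splitsOffAt {x y z : ℤ} (hxy : x ≠ y) (hxz : x ≠ z) (hyz : y ≠ z) :
    UpToPerm (fun x y z => x < y ∧ ∃ f, SplitsOffAt f x y z) x y z := by
  suffices UpToPerm (fun x y z => x ≠ y ∧ ∃ f, SplitsOffAt f x y z) x y z from
    this.map id fun a b c ⟨hab, f, h⟩ => hab.lt_or_gt.elim (fun hlt => .of ⟨hlt, f, h⟩)
      fun hgt => .swap (.of ⟨hgt, f, h.symm⟩)
  obtain ⟨f, r, hr, hy⟩ := exists_eq_two_pow_mul_odd_int (sub_ne_zero.2 hxy.symm)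
  obtain ⟨g, s, hs, hz⟩ := exists_eq_two_pow_mul_odd_int (sub_ne_zero.2 hxz.symm)
  rcases lt_trichotomy f g with hfg | rfl | hgf
  · refine (UpToPerm.of ⟨hxz, f, ?_, r, hr, hy⟩).swap.rotate
    exact hz ▸ (pow_dvd_pow 2 hfg).mul_right s
  · refine (UpToPerm.of ⟨hyz, f, ?_, -r, hr.neg, by linarith⟩).rotate.rotate
    rw [← sub_sub_sub_cancel_right z y x, hy, hz, ← mul_sub, pow_succ]
    exact mul_dvd_mul_left _ (hs.sub_odd hr).two_dvd
  · refine UpToPerm.of ⟨hxy, g, ?_, s, hs, hz⟩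
    exact hy ▸ (pow_dvd_pow 2 hgf).mul_right r

namespace SplitsOffAt

variable {f : ℕ} {x y z : ℤ}

lemma emod_two_eq (h : SplitsOffAt (f + 1) x y z) : y % 2 = x % 2 ∧ z % 2 = x % 2 := by
  obtain ⟨⟨w, hw⟩, r, -, hr⟩ := h
  simp only [pow_succ, mul_assoc, mul_left_comm _ (2 : ℤ)] at hw hr
  omega

lemma ediv_two (h : SplitsOffAt (f + 1) x y z) : SplitsOffAt f (x / 2) (y / 2) (z / 2) := by
  obtain ⟨⟨w, hw⟩, r, hr, hr'⟩ := h
  rw [pow_succ', mul_assoc] at hw hr'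
  exact ⟨⟨w, by omega⟩, r, hr, by omega⟩

lemma lt_of_mem_Ico {K : ℕ} (h : SplitsOffAt f x y z) (hx : x ∈ Finset.Ico 0 (2 ^ K))
    (hz : z ∈ Finset.Ico 0 (2 ^ K)) : f < K := by
  obtain ⟨-, r, hr, hz'⟩ := h
  rw [Finset.mem_Ico] at hx hz
  have hle : (2 : ℤ) ^ f ≤ |z - x| := by
    rw [hz', abs_mul, abs_of_pos (by positivity)]
    exact le_mul_of_one_le_right (by positivity)
      (Int.one_le_abs (by rintro rfl; exact Int.not_odd_zero hr))
  exact (pow_lt_pow_iff_right₀ (by norm_num : (1 : ℤ) < 2)).1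
    (hle.trans_lt (abs_lt.2 ⟨by linarith, by linarith⟩))

end SplitsOffAt

/-- The binary digit of weight `2 ^ f` of `z`, encoded as a sign: `1` for the digit `1` and
`-1` for the digit `0`. -/
def digitSign (f : ℕ) (z : ℤ) : ℝ := 2 * ((z / 2 ^ f % 2 : ℤ) : ℝ) - 1

lemma digitSign_eq_neg {f : ℕ} {z z' r : ℤ} (hr : Odd r) (h : z' - z = 2 ^ f * r) :
    digitSign f z' = -digitSign f z := by
  obtain rfl : z' = z + 2 ^ f * r := by linarith
  obtain ⟨k, rfl⟩ := hr
  rw [digitSign, digitSign, Int.add_mul_ediv_left _ _ (by positivity)]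
  rcases Int.emod_two_eq_zero_or_one (z / 2 ^ f) with h | h
  · rw [show (z / 2 ^ f + (2 * k + 1)) % 2 = 1 by omega, h]; norm_num
  · rw [show (z / 2 ^ f + (2 * k + 1)) % 2 = 0 by omega, h]; norm_num

lemma digitSign_succ (f : ℕ) (z : ℤ) : digitSign (f + 1) z = digitSign f (z / 2) := by
  rw [digitSign, digitSign, pow_succ', Int.ediv_ediv_of_nonneg (by norm_num)]

end BinaryDigits

section HortonFunctions

open Filter Topology

/-- The point of the graph of `h` over the integer `x`. -/
def graphPoint (h : ℤ → ℝ) (x : ℤ) : ℝ × ℝ := (x, h x)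

/-- The graph of `h` over `0, …, 2 ^ K - 1` is a Horton set, in the following quantitative form:
if `z` splits off from `x` and `y` at the digit of weight `2 ^ f`, then its graph point lies above
or below the line through those of `x` and `y` according to that digit of `z`. -/
def IsHortonFunction (K : ℕ) (h : ℤ → ℝ) : Prop :=
  ∀ ⦃f : ℕ⦄ ⦃x y z : ℤ⦄, x ∈ Finset.Ico 0 (2 ^ K) → y ∈ Finset.Ico 0 (2 ^ K) →
    z ∈ Finset.Ico 0 (2 ^ K) → x ≠ y → SplitsOffAt f x y z →
      0 < digitSign f z * (y - x) * orient (graphPoint h x) (graphPoint h y) (graphPoint h z)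

lemma eventually_pos_of_eq_pow_mul (d : ℕ) {F G : ℝ → ℝ} (hG : Continuous G) (h0 : 0 < G 0)
    (hFG : ∀ ε, F ε = ε ^ d * G ε) : ∀ᶠ ε in 𝓝[>] (0 : ℝ), 0 < F ε := by
  have hpos : ∀ᶠ ε in 𝓝[>] (0 : ℝ), 0 < G ε :=
    (hG.continuousAt.eventually_const_lt h0).filter_mono nhdsWithin_le_nhds
  filter_upwards [hpos, self_mem_nhdsWithin] with ε hε (hε0 : 0 < ε)
  rw [hFG]
  positivity

/-- The sum of the `K` lowest binary digits of `t`, with weights `1, δ, δ ^ 2, …`: the lower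
digits decide first which of two points is higher, as in the recursive definition of Horton
sets. -/
def digitSum : ℕ → ℝ → ℤ → ℝ
  | 0, _, _ => 0
  | K + 1, δ, t => ((t % 2 : ℤ) : ℝ) + δ * digitSum K δ (t / 2)

lemma continuous_digitSum (K : ℕ) (t : ℤ) : Continuous fun δ => digitSum K δ t := by
  induction K generalizing t with
  | zero => simp only [digitSum]; fun_prop
  | succ K ih =>
    simp only [digitSum]
    have := ih (t / 2)
    fun_prop

lemma eventually_pos_orient_digitSum_zero {K : ℕ} {x y z : ℤ} (hxy : x ≠ y)
    (h : SplitsOffAt 0 x y z) : ∀ᶠ δ in 𝓝[>] (0 : ℝ), 0 < digitSign 0 z * (y - x) *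
      orient (graphPoint (digitSum (K + 1) δ) x) (graphPoint (digitSum (K + 1) δ) y)
        (graphPoint (digitSum (K + 1) δ) z) := by
  refine eventually_pos_of_eq_pow_mul 0 ?_ ?_ fun δ => by rw [pow_zero, one_mul]
  · have hc := continuous_digitSum (K + 1)
    simp only [orient, graphPoint]
    have := hc x
    have := hc y
    have := hc z
    fun_prop
  · obtain ⟨⟨w, hw⟩, r, ⟨k, rfl⟩, hz⟩ := h
    have hyx : y % 2 = x % 2 := by omega
    have hpos : 0 < ((y : ℝ) - x) * (y - x) := mul_self_pos.2 <| by
      rw [sub_ne_zero]; exact_mod_cast hxy.symm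
    have hdigits : x % 2 = 0 ∧ z % 2 = 1 ∨ x % 2 = 1 ∧ z % 2 = 0 := by
      rw [pow_zero] at hz; omega
    simp only [orient, graphPoint, digitSum, digitSign, zero_mul, add_zero, pow_zero,
      Int.ediv_one, hyx]
    rcases hdigits with ⟨hx, hz⟩ | ⟨hx, hz⟩ <;> rw [hx, hz] <;> norm_num <;> nlinarith

lemma orient_digitSum_succ {f K : ℕ} {x y z : ℤ} (h : SplitsOffAt (f + 1) x y z) (δ : ℝ) :
    digitSign (f + 1) z * (y - x) * orient (graphPoint (digitSum (K + 1) δ) x)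
        (graphPoint (digitSum (K + 1) δ) y) (graphPoint (digitSum (K + 1) δ) z) =
      4 * δ * (digitSign f (z / 2) * (((y / 2 : ℤ) : ℝ) - ((x / 2 : ℤ) : ℝ)) *
        orient (graphPoint (digitSum K δ) (x / 2)) (graphPoint (digitSum K δ) (y / 2))
          (graphPoint (digitSum K δ) (z / 2))) := by
  obtain ⟨hy, hz⟩ := h.emod_two_eq
  have hsub {u : ℤ} (hu : u % 2 = x % 2) :
      (u : ℝ) - x = 2 * (((u / 2 : ℤ) : ℝ) - ((x / 2 : ℤ) : ℝ)) := by
    have : u - x = 2 * (u / 2 - x / 2) := by omega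
    exact_mod_cast this
  simp only [digitSign_succ, orient, graphPoint, digitSum, hsub hy, hsub hz, hy, hz]
  ring

lemma eventually_pos_orient_digitSum {f K : ℕ} (hf : f < K) {x y z : ℤ} (hxy : x ≠ y)
    (h : SplitsOffAt f x y z) : ∀ᶠ δ in 𝓝[>] (0 : ℝ), 0 < digitSign f z * (y - x) *
      orient (graphPoint (digitSum K δ) x) (graphPoint (digitSum K δ) y)
        (graphPoint (digitSum K δ) z) := by
  induction f generalizing K x y z with
  | zero =>
    obtain ⟨K, rfl⟩ := Nat.exists_eq_succ_of_ne_zero hf.ne'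
    exact eventually_pos_orient_digitSum_zero hxy h
  | succ f ih =>
    obtain ⟨K, rfl⟩ := Nat.exists_eq_succ_of_ne_zero (Nat.ne_zero_of_lt hf)
    have hne : x / 2 ≠ y / 2 := by
      have := h.emod_two_eq.1
      omega
    filter_upwards [ih (Nat.lt_of_succ_lt_succ hf) hne h.ediv_two, self_mem_nhdsWithin] with δ hδ
      (hδ0 : 0 < δ)
    rw [Nat.succ_eq_add_one, orient_digitSum_succ h]
    positivity

lemma exists_isHortonFunction (K : ℕ) : ∃ h : ℤ → ℝ, IsHortonFunction K h := by
  have hev : ∀ᶠ δ in 𝓝[>] (0 : ℝ), ∀ x ∈ Finset.Ico (0 : ℤ) (2 ^ K),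
      ∀ y ∈ Finset.Ico (0 : ℤ) (2 ^ K), ∀ z ∈ Finset.Ico (0 : ℤ) (2 ^ K), ∀ f ∈ Finset.range K,
      x ≠ y → SplitsOffAt f x y z → 0 < digitSign f z * (y - x) *
        orient (graphPoint (digitSum K δ) x) (graphPoint (digitSum K δ) y)
          (graphPoint (digitSum K δ) z) := by
    simp only [eventually_all_finset, eventually_imp_distrib_left]
    exact fun x _ y _ z _ f hf hxy h =>
      eventually_pos_orient_digitSum (Finset.mem_range.1 hf) hxy h
  obtain ⟨δ, hδ⟩ := hev.exists
  exact ⟨digitSum K δ, fun f x y z hx hy hz hxy h =>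
    hδ x hx y hy z hz f (Finset.mem_range.2 (h.lt_of_mem_Ico hx hz)) hxy h⟩

end HortonFunctions

section HortonClusterGrids

open Filter Topology

lemma mul_pos_trans {a b c : ℝ} (hab : 0 < a * b) (hbc : 0 < b * c) : 0 < a * c := by
  have h : 0 < b * b * (a * c) := by linarith [mul_pos hab hbc]
  exact pos_of_mul_pos_right h (mul_self_nonneg b)

/-- The lattice points of the square `[0, 2 ^ K)²`. -/
def grid (K : ℕ) : Finset (ℤ × ℤ) := Finset.Ico 0 (2 ^ K) ×ˢ Finset.Ico 0 (2 ^ K)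

lemma mem_grid {K : ℕ} {A : ℤ × ℤ} :
    A ∈ grid K ↔ A.1 ∈ Finset.Ico 0 (2 ^ K) ∧ A.2 ∈ Finset.Ico 0 (2 ^ K) :=
  Finset.mem_product

/-- The determinant of two lattice vectors. -/
def cross (u v : ℤ × ℤ) : ℤ := u.1 * v.2 - u.2 * v.1

/-- A sign pattern `β` for the points of `P` over the lattice line `A + ℤ • g`: these points are
arranged like a Horton set, where `β f t` says on which side of the lines through two points
agreeing with `t` below, but not at, the binary digit of weight `2 ^ f` the points over
`A + t • g` lie. -/
structure IsHortonPattern (K : ℕ) {k : ℕ} (P : ℤ × ℤ → Fin (k + 1) → ℝ × ℝ) (A g : ℤ × ℤ)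
    (β : ℕ → ℤ → ℝ) : Prop where
  eq_neg : ∀ {f : ℕ} {t t' r : ℤ}, Odd r → t' - t = 2 ^ f * r → β f t' = -β f t
  orient_pos : ∀ {f : ℕ} {t₁ t₂ t₃ : ℤ}, A + t₁ • g ∈ grid K → A + t₂ • g ∈ grid K →
    A + t₃ • g ∈ grid K → t₁ < t₂ → SplitsOffAt f t₁ t₂ t₃ → ∀ l l' l'',
      0 < β f t₃ * orient (P (A + t₁ • g) l) (P (A + t₂ • g) l') (P (A + t₃ • g) l'')

/-- `P A l`, for `A ∈ grid K` and `l : Fin (k + 1)`, are the points of a squared Horton set each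
point of which is blown up to a cluster of `k + 1` points: every cluster is a tiny concave chain
in the direction `(2 ^ K, 1)`, which is not the direction of any line through two grid points. -/
structure IsHortonClusterGrid (K : ℕ) {k : ℕ} (P : ℤ × ℤ → Fin (k + 1) → ℝ × ℝ) : Prop where
  orient_pos : ∀ {A B C}, A ∈ grid K → B ∈ grid K → C ∈ grid K →
    0 < cross (B - A) (C - A) → ∀ l l' l'', 0 < orient (P A l) (P B l') (P C l'')
  exists_pattern : ∀ A g : ℤ × ℤ, g ≠ 0 → ∃ β, IsHortonPattern K P A g β
  cluster_direction : ∀ {A B}, A ∈ grid K → B ∈ grid K → A ≠ B → ∀ {l l' : Fin (k + 1)},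
    l ≠ l' → ∀ l'', 0 < (((l' : ℕ) : ℝ) - (l : ℕ)) *
      ((2 ^ K * (B.2 - A.2) - (B.1 - A.1) : ℤ) : ℝ) * orient (P A l) (P A l') (P B l'')
  cluster_concave : ∀ {A}, A ∈ grid K → ∀ {l l' l'' : Fin (k + 1)}, l ≠ l' → l ≠ l'' →
    l' ≠ l'' → (((l' : ℕ) : ℝ) - (l : ℕ)) * (((l'' : ℕ) : ℝ) - (l : ℕ)) *
      (((l'' : ℕ) : ℝ) - (l' : ℕ)) * orient (P A l) (P A l') (P A l'') < 0
  abs_sub_le : ∀ {A}, A ∈ grid K → ∀ l,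
    |(P A l).1 - A.1| ≤ 1 / 2 ^ (K + 2) ∧ |(P A l).2 - A.2| ≤ 1 / 2 ^ (K + 2)

/-- The perturbation of the lattice point `A` with label `s`. The displacement of order `ε` makes
non-vertical lattice lines Horton, that of order `ε ^ 2` the vertical ones; the labels move the
point along the line of slope `1 / M`, and `ε ^ 4` bends that line. -/
def perturb (h : ℤ → ℝ) (M ε : ℝ) (A : ℤ × ℤ) (s : ℝ) : ℝ × ℝ :=
  (A.1 + ε ^ 2 * h A.2 + ε ^ 3 * M * s, A.2 + ε * h A.1 + ε ^ 3 * s - ε ^ 4 * s ^ 2)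

section Perturb

variable (h : ℤ → ℝ) (M : ℝ) {A B C : ℤ × ℤ}

lemma eventually_orient_perturb_pos (hd : 0 < cross (B - A) (C - A)) (s s' s'' : ℝ) :
    ∀ᶠ ε in 𝓝[>] (0 : ℝ),
      0 < orient (perturb h M ε A s) (perturb h M ε B s') (perturb h M ε C s'') := by
  refine eventually_pos_of_eq_pow_mul 0 ?_ ?_ fun ε => by rw [pow_zero, one_mul]
  · simp only [orient, perturb]
    fun_prop
  · have : (0 : ℝ) < (cross (B - A) (C - A) : ℤ) := by exact_mod_cast hd
    simpa [orient, perturb, cross] using this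

lemma eventually_orient_perturb_of_collinear (hd : cross (B - A) (C - A) = 0)
    (hh : orient (graphPoint h A.1) (graphPoint h B.1) (graphPoint h C.1) ≠ 0) (s s' s'' : ℝ) :
    ∀ᶠ ε in 𝓝[>] (0 : ℝ),
      0 < orient (graphPoint h A.1) (graphPoint h B.1) (graphPoint h C.1) *
        orient (perturb h M ε A s) (perturb h M ε B s') (perturb h M ε C s'') := by
  have hd' : ((B.1 : ℝ) - A.1) * (C.2 - A.2) - (B.2 - A.2) * (C.1 - A.1) = 0 := by
    exact_mod_cast hd
  refine eventually_pos_of_eq_pow_mul 1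
    (G := fun ε => orient (graphPoint h A.1) (graphPoint h B.1) (graphPoint h C.1) *
      ((B.1 - A.1 : ℝ) * (h C.1 - h A.1 + ε ^ 2 * (s'' - s) - ε ^ 3 * (s'' ^ 2 - s ^ 2)) -
          (h B.1 - h A.1 + ε ^ 2 * (s' - s) - ε ^ 3 * (s' ^ 2 - s ^ 2)) * (C.1 - A.1) +
        ε * ((h B.2 - h A.2 + ε * M * (s' - s)) * (C.2 - A.2) -
          (B.2 - A.2) * (h C.2 - h A.2 + ε * M * (s'' - s))) +
        ε ^ 2 * ((h B.2 - h A.2 + ε * M * (s' - s)) *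
            (h C.1 - h A.1 + ε ^ 2 * (s'' - s) - ε ^ 3 * (s'' ^ 2 - s ^ 2)) -
          (h B.1 - h A.1 + ε ^ 2 * (s' - s) - ε ^ 3 * (s' ^ 2 - s ^ 2)) *
            (h C.2 - h A.2 + ε * M * (s'' - s))))) (by fun_prop) ?_ fun ε => ?_
  · simpa [orient, graphPoint] using mul_self_pos.2 hh
  · simp only [orient, graphPoint, perturb]
    linear_combination
      ((B.1 - A.1 : ℝ) * (h C.1 - h A.1) - (h B.1 - h A.1) * (C.1 - A.1)) * hd'

lemma eventually_orient_perturb_of_vertical (hB : B.1 = A.1) (hC : C.1 = A.1)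
    (hh : orient (graphPoint h A.2) (graphPoint h B.2) (graphPoint h C.2) ≠ 0) (s s' s'' : ℝ) :
    ∀ᶠ ε in 𝓝[>] (0 : ℝ),
      0 < -orient (graphPoint h A.2) (graphPoint h B.2) (graphPoint h C.2) *
        orient (perturb h M ε A s) (perturb h M ε B s') (perturb h M ε C s'') := by
  refine eventually_pos_of_eq_pow_mul 2
    (G := fun ε => -orient (graphPoint h A.2) (graphPoint h B.2) (graphPoint h C.2) *
      ((h B.2 - h A.2 + ε * M * (s' - s)) * (C.2 - A.2) -
          (B.2 - A.2) * (h C.2 - h A.2 + ε * M * (s'' - s)) +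
        ε ^ 3 * ((h B.2 - h A.2 + ε * M * (s' - s)) *
            (s'' - s - ε * (s'' ^ 2 - s ^ 2)) -
          (s' - s - ε * (s' ^ 2 - s ^ 2)) * (h C.2 - h A.2 + ε * M * (s'' - s)))))
    (by fun_prop) ?_ fun ε => ?_
  · have := mul_self_pos.2 hh
    simp only [orient, graphPoint] at this ⊢
    linarith
  · simp only [orient, graphPoint, perturb, hB, hC]
    ring

lemma eventually_orient_perturb_cluster {s s' : ℝ} (hs : s ≠ s')
    (hM : M * (B.2 - A.2) - (B.1 - A.1) ≠ 0) (s'' : ℝ) : ∀ᶠ ε in 𝓝[>] (0 : ℝ),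
      0 < (s' - s) * (M * (B.2 - A.2) - (B.1 - A.1)) *
        orient (perturb h M ε A s) (perturb h M ε A s') (perturb h M ε B s'') := by
  refine eventually_pos_of_eq_pow_mul 3
    (G := fun ε => (s' - s) * (M * (B.2 - A.2) - (B.1 - A.1)) *
      (M * (s' - s) *
          (B.2 - A.2 + ε * (h B.1 - h A.1) + ε ^ 3 * (s'' - s) - ε ^ 4 * (s'' ^ 2 - s ^ 2)) -
        (s' - s - ε * (s' ^ 2 - s ^ 2)) *
          (B.1 - A.1 + ε ^ 2 * (h B.2 - h A.2) + ε ^ 3 * M * (s'' - s))))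
    (by fun_prop) ?_ fun ε => ?_
  · have := mul_self_pos.2 (mul_ne_zero (sub_ne_zero.2 hs.symm) hM)
    linarith
  · simp only [orient, perturb]
    ring

lemma orient_perturb_self (ε : ℝ) (A : ℤ × ℤ) (s s' s'' : ℝ) :
    orient (perturb h M ε A s) (perturb h M ε A s') (perturb h M ε A s'') =
      -(ε ^ 7 * M * ((s' - s) * (s'' - s) * (s'' - s'))) := by
  simp only [orient, perturb]
  ring

lemma eventually_abs_perturb_sub_lt (A : ℤ × ℤ) (s : ℝ) {η : ℝ} (hη : 0 < η) :
    ∀ᶠ ε in 𝓝[>] (0 : ℝ),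
      |(perturb h M ε A s).1 - A.1| < η ∧ |(perturb h M ε A s).2 - A.2| < η := by
  have : Continuous fun ε => perturb h M ε A s := by
    unfold perturb
    fun_prop
  refine Eventually.filter_mono nhdsWithin_le_nhds (Eventually.and ?_ ?_)
  · exact (by fun_prop : ContinuousAt (fun ε => |(perturb h M ε A s).1 - A.1|) 0)
      |>.eventually_lt_const (by simpa [perturb] using hη)
  · exact (by fun_prop : ContinuousAt (fun ε => |(perturb h M ε A s).2 - A.2|) 0)
      |>.eventually_lt_const (by simpa [perturb] using hη)

end Perturb

lemma SplitsOffAt.add_mul {f : ℕ} {t₁ t₂ t₃ : ℤ} (h : SplitsOffAt f t₁ t₂ t₃) (x : ℤ) (e : ℕ)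
    {o : ℤ} (ho : Odd o) :
    SplitsOffAt (f + e) (x + t₁ * (2 ^ e * o)) (x + t₂ * (2 ^ e * o))
      (x + t₃ * (2 ^ e * o)) := by
  obtain ⟨⟨w, hw⟩, r, hr, hr'⟩ := h
  refine ⟨⟨w * o, ?_⟩, r * o, hr.mul ho, ?_⟩
  · rw [add_right_comm, pow_add]
    linear_combination (2 ^ e * o) * hw
  · rw [pow_add]
    linear_combination (2 ^ e * o) * hr'

lemma IsHortonFunction.exists_pattern {K k : ℕ} {h : ℤ → ℝ} (hh : IsHortonFunction K h)
    {P : ℤ × ℤ → Fin (k + 1) → ℝ × ℝ} (φ : ℤ × ℤ →+ ℤ)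
    (hφ : ∀ A ∈ grid K, φ A ∈ Finset.Ico 0 (2 ^ K)) (s : ℝ) (A : ℤ × ℤ) {g : ℤ × ℤ}
    (hg : φ g ≠ 0)
    (horient : ∀ t₁ t₂ t₃ : ℤ, A + t₁ • g ∈ grid K → A + t₂ • g ∈ grid K → A + t₃ • g ∈ grid K →
      orient (graphPoint h (φ (A + t₁ • g))) (graphPoint h (φ (A + t₂ • g)))
        (graphPoint h (φ (A + t₃ • g))) ≠ 0 → ∀ l l' l'',
      0 < s * orient (graphPoint h (φ (A + t₁ • g))) (graphPoint h (φ (A + t₂ • g)))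
        (graphPoint h (φ (A + t₃ • g))) *
          orient (P (A + t₁ • g) l) (P (A + t₂ • g) l') (P (A + t₃ • g) l'')) :
    ∃ β, IsHortonPattern K P A g β := by
  obtain ⟨e, o, ho, heo⟩ := exists_eq_two_pow_mul_odd_int hg
  have hcoord (t : ℤ) : φ (A + t • g) = φ A + t * (2 ^ e * o) := by
    rw [map_add, map_zsmul, smul_eq_mul, heo]
  refine ⟨fun f t => s * digitSign (f + e) (φ (A + t • g)) * φ g, ?_, ?_⟩
  · intro f t t' r hr htt'
    have : φ (A + t' • g) - φ (A + t • g) = 2 ^ (f + e) * (r * o) := by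
      rw [hcoord, hcoord, pow_add]
      linear_combination (2 ^ e * o) * htt'
    rw [digitSign_eq_neg (hr.mul ho) this]
    ring
  · intro f t₁ t₂ t₃ h₁ h₂ h₃ hlt hsplit l l' l''
    have hne : φ (A + t₁ • g) ≠ φ (A + t₂ • g) := by
      rw [hcoord, hcoord, ← heo, Ne, add_right_inj, mul_left_inj' hg]
      exact hlt.ne
    have hrule := hh (hφ _ h₁) (hφ _ h₂) (hφ _ h₃) hne
      (by simpa only [hcoord] using hsplit.add_mul (φ A) e ho)
    have hsign := horient t₁ t₂ t₃ h₁ h₂ h₃ (right_ne_zero_of_mul hrule.ne') l l' l''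
    set H := orient (graphPoint h (φ (A + t₁ • g))) (graphPoint h (φ (A + t₂ • g)))
      (graphPoint h (φ (A + t₃ • g)))
    have hsub : (φ (A + t₂ • g) : ℝ) - φ (A + t₁ • g) = ((t₂ - t₁ : ℤ) : ℝ) * φ g := by
      rw [hcoord, hcoord, heo]; push_cast; ring
    have hpos : (0 : ℝ) < ((t₂ - t₁ : ℤ) : ℝ) := by exact_mod_cast sub_pos.2 hlt
    have hdigit : 0 < digitSign (f + e) (φ (A + t₃ • g)) * φ g * H := by
      rw [hsub] at hrule
      refine pos_of_mul_pos_right (a := ((t₂ - t₁ : ℤ) : ℝ)) ?_ hpos.le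
      linarith
    have := mul_pos_trans (b := H) hdigit
      (c := s * orient (P (A + t₁ • g) l) (P (A + t₂ • g) l') (P (A + t₃ • g) l''))
      (by linarith)
    linarith

lemma two_pow_mul_sub_ne_zero {K : ℕ} {A B : ℤ × ℤ} (hA : A ∈ grid K) (hB : B ∈ grid K)
    (hAB : A ≠ B) : 2 ^ K * (B.2 - A.2) - (B.1 - A.1) ≠ 0 := by
  intro h
  simp only [mem_grid, Finset.mem_Ico] at hA hB
  have h1 : B.1 - A.1 = 0 := Int.eq_zero_of_abs_lt_dvd ⟨B.2 - A.2, (sub_eq_zero.1 h).symm⟩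
    (abs_lt.2 ⟨by linarith, by linarith⟩)
  rw [h1, sub_zero, mul_eq_zero, or_iff_right (by positivity)] at h
  exact hAB (Prod.ext (by linarith) (by linarith))

/-- The perturbed grid, with the labels `0, …, k` of each cluster. -/
def perturbedGrid (K k : ℕ) (h : ℤ → ℝ) (ε : ℝ) (A : ℤ × ℤ) (l : Fin (k + 1)) : ℝ × ℝ :=
  perturb h (2 ^ K) ε A (l : ℕ)

lemma IsHortonFunction.eventually_exists_pattern {K : ℕ} {h : ℤ → ℝ} (hh : IsHortonFunction K h)
    (k : ℕ) : ∀ᶠ ε in 𝓝[>] (0 : ℝ), ∀ A g : ℤ × ℤ, g ≠ 0 →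
      ∃ β, IsHortonPattern K (perturbedGrid K k h ε) A g β := by
  have hline : ∀ᶠ ε in 𝓝[>] (0 : ℝ), ∀ A ∈ grid K, ∀ B ∈ grid K, ∀ C ∈ grid K,
      ∀ l l' l'' : Fin (k + 1), cross (B - A) (C - A) = 0 →
      orient (graphPoint h A.1) (graphPoint h B.1) (graphPoint h C.1) ≠ 0 →
      0 < orient (graphPoint h A.1) (graphPoint h B.1) (graphPoint h C.1) * orient
        (perturbedGrid K k h ε A l) (perturbedGrid K k h ε B l') (perturbedGrid K k h ε C l'') := by
    simp only [eventually_all_finset, eventually_all]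
    exact fun A _ B _ C _ l l' l'' hd hne =>
      eventually_orient_perturb_of_collinear h _ hd hne _ _ _
  have hvertical : ∀ᶠ ε in 𝓝[>] (0 : ℝ), ∀ A ∈ grid K, ∀ B ∈ grid K, ∀ C ∈ grid K,
      ∀ l l' l'' : Fin (k + 1), B.1 = A.1 → C.1 = A.1 →
      orient (graphPoint h A.2) (graphPoint h B.2) (graphPoint h C.2) ≠ 0 →
      0 < -orient (graphPoint h A.2) (graphPoint h B.2) (graphPoint h C.2) * orient
        (perturbedGrid K k h ε A l) (perturbedGrid K k h ε B l') (perturbedGrid K k h ε C l'') := by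
    simp only [eventually_all_finset, eventually_all]
    exact fun A _ B _ C _ l l' l'' hB hC hne =>
      eventually_orient_perturb_of_vertical h _ hB hC hne _ _ _
  filter_upwards [hline, hvertical] with ε hline hvertical A g hg
  by_cases hg1 : g.1 = 0
  · have hg2 : g.2 ≠ 0 := fun hg2 => hg (Prod.ext hg1 hg2)
    refine hh.exists_pattern (AddMonoidHom.snd ℤ ℤ) (fun A hA => (mem_grid.1 hA).2) (-1) A hg2
      fun t₁ t₂ t₃ h₁ h₂ h₃ hne l l' l'' => ?_
    rw [neg_one_mul]
    exact hvertical _ h₁ _ h₂ _ h₃ l l' l'' (by simp [hg1]) (by simp [hg1]) hne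
  · refine hh.exists_pattern (AddMonoidHom.fst ℤ ℤ) (fun A hA => (mem_grid.1 hA).1) 1 A hg1
      fun t₁ t₂ t₃ h₁ h₂ h₃ hne l l' l'' => ?_
    rw [one_mul]
    exact hline _ h₁ _ h₂ _ h₃ l l' l'' (by simp [cross]; ring) hne

lemma IsHortonFunction.eventually_isHortonClusterGrid {K : ℕ} {h : ℤ → ℝ}
    (hh : IsHortonFunction K h) (k : ℕ) :
    ∀ᶠ ε in 𝓝[>] (0 : ℝ), IsHortonClusterGrid K (perturbedGrid K k h ε) := by
  have horient : ∀ᶠ ε in 𝓝[>] (0 : ℝ), ∀ A ∈ grid K, ∀ B ∈ grid K, ∀ C ∈ grid K,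
      ∀ l l' l'' : Fin (k + 1), 0 < cross (B - A) (C - A) → 0 < orient
        (perturbedGrid K k h ε A l) (perturbedGrid K k h ε B l') (perturbedGrid K k h ε C l'') := by
    simp only [eventually_all_finset, eventually_all]
    exact fun A _ B _ C _ l l' l'' hd => eventually_orient_perturb_pos h _ hd _ _ _
  have hcluster : ∀ᶠ ε in 𝓝[>] (0 : ℝ), ∀ A ∈ grid K, ∀ B ∈ grid K, A ≠ B →
      ∀ l l' l'' : Fin (k + 1), l ≠ l' → 0 < (((l' : ℕ) : ℝ) - (l : ℕ)) *
        (2 ^ K * (B.2 - A.2) - (B.1 - A.1)) * orient (perturbedGrid K k h ε A l)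
          (perturbedGrid K k h ε A l') (perturbedGrid K k h ε B l'') := by
    simp only [eventually_all_finset, eventually_all]
    exact fun A hA B hB hAB l l' l'' hl => eventually_orient_perturb_cluster h _
      (by exact_mod_cast Fin.val_ne_of_ne hl)
      (by exact_mod_cast two_pow_mul_sub_ne_zero hA hB hAB) _
  have hclose : ∀ᶠ ε in 𝓝[>] (0 : ℝ), ∀ A ∈ grid K, ∀ l : Fin (k + 1),
      |(perturbedGrid K k h ε A l).1 - A.1| < 1 / 2 ^ (K + 2) ∧
        |(perturbedGrid K k h ε A l).2 - A.2| < 1 / 2 ^ (K + 2) := by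
    simp only [eventually_all_finset, eventually_all]
    exact fun A _ l => eventually_abs_perturb_sub_lt h _ A _ (by positivity)
  filter_upwards [horient, hh.eventually_exists_pattern k, hcluster, hclose, self_mem_nhdsWithin]
    with ε horient hpattern hcluster hclose (hε : 0 < ε)
  refine ⟨fun hA hB hC hd l l' l'' => horient _ hA _ hB _ hC l l' l'' hd, hpattern, ?_, ?_,
    fun hA l => (hclose _ hA l).imp le_of_lt le_of_lt⟩
  · intro A B hA hB hAB l l' hl l''
    exact_mod_cast hcluster A hA B hB hAB l l' l'' hl
  · intro A _ l l' l'' h₁ h₂ h₃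
    have hsub {i j : Fin (k + 1)} (hij : i ≠ j) : ((j : ℕ) : ℝ) - (i : ℕ) ≠ 0 := by
      rw [sub_ne_zero]
      exact_mod_cast Fin.val_ne_of_ne hij.symm
    have hpos := mul_self_pos.2 (mul_ne_zero (mul_ne_zero (hsub h₁) (hsub h₂)) (hsub h₃))
    rw [perturbedGrid, perturbedGrid, perturbedGrid, orient_perturb_self]
    have : 0 < ε ^ 7 * 2 ^ K := by positivity
    linarith [mul_pos this hpos]

lemma exists_isHortonClusterGrid (K k : ℕ) :
    ∃ P : ℤ × ℤ → Fin (k + 1) → ℝ × ℝ, IsHortonClusterGrid K P := by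
  obtain ⟨h, hh⟩ := exists_isHortonFunction K
  obtain ⟨ε, hε⟩ := (hh.eventually_isHortonClusterGrid k).exists
  exact ⟨_, hε⟩

end HortonClusterGrids

section Fibers

lemma mul_nonneg_of_mul_nonpos_of_mul_nonpos {a b c : ℝ} (ha : a ≠ 0) (hb : a * b ≤ 0)
    (hc : a * c ≤ 0) : 0 ≤ b * c := by
  have h : 0 ≤ a * a * (b * c) := by linarith [mul_nonneg_of_nonpos_of_nonpos hb hc]
  exact nonneg_of_mul_nonneg_right h (mul_self_pos.2 ha)

lemma mem_Ico_of_weighted_average {a b c d x y z N : ℤ} (ha : a ∈ Finset.Ico 0 N)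
    (hb : b ∈ Finset.Ico 0 N) (hc : c ∈ Finset.Ico 0 N) (hx : 0 ≤ x) (hy : 0 ≤ y) (hz : 0 ≤ z)
    (hxyz : 0 < x + y + z) (h : (x + y + z) * d = x * a + y * b + z * c) :
    d ∈ Finset.Ico 0 N := by
  simp only [Finset.mem_Ico] at *
  constructor
  · refine nonneg_of_mul_nonneg_right (h ▸ ?_) hxyz
    have := mul_nonneg hx ha.1
    have := mul_nonneg hy hb.1
    have := mul_nonneg hz hc.1
    positivity
  · by_contra! hd
    have := mul_le_mul_of_nonneg_left (Int.le_sub_one_of_lt ha.2) hx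
    have := mul_le_mul_of_nonneg_left (Int.le_sub_one_of_lt hb.2) hy
    have := mul_le_mul_of_nonneg_left (Int.le_sub_one_of_lt hc.2) hz
    have := mul_le_mul_of_nonneg_left hd hxyz.le
    linarith

lemma mem_grid_of_weighted_average {K : ℕ} {A B C D : ℤ × ℤ} {x y z : ℤ} (hA : A ∈ grid K)
    (hB : B ∈ grid K) (hC : C ∈ grid K) (hx : 0 ≤ x) (hy : 0 ≤ y) (hz : 0 ≤ z)
    (hxyz : 0 < x + y + z) (h : (x + y + z) • D = x • A + y • B + z • C) : D ∈ grid K := by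
  rw [mem_grid] at *
  exact ⟨mem_Ico_of_weighted_average hA.1 hB.1 hC.1 hx hy hz hxyz (congrArg Prod.fst h),
    mem_Ico_of_weighted_average hA.2 hB.2 hC.2 hx hy hz hxyz (congrArg Prod.snd h)⟩

lemma add_smul_mem_grid {K : ℕ} {A g : ℤ × ℤ} {t u t' : ℤ} (h : t < u) (h' : u < t')
    (ht : A + t • g ∈ grid K) (ht' : A + t' • g ∈ grid K) : A + u • g ∈ grid K :=
  mem_grid_of_weighted_average ht ht' ht' (x := t' - u) (y := u - t) (z := 0) (by linarith)
    (by linarith) le_rfl (by linarith) (by module)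

/-- From every point of `P` over `C`, the points of `P` over the lattice points of the
progression `A + ℤ • g` are seen in the order of the progression; `σ` is the direction of
rotation. -/
def SeesInOrder (K : ℕ) {k : ℕ} (P : ℤ × ℤ → Fin (k + 1) → ℝ × ℝ) (g A C : ℤ × ℤ) (σ : ℝ) :
    Prop :=
  ∀ ⦃t t' : ℤ⦄, t < t' → A + t • g ∈ grid K → A + t' • g ∈ grid K → ∀ l l' l'',
    0 < σ * orient (P (A + t • g) l) (P (A + t' • g) l') (P C l'')

/-- The triangle formed by the points of `P` with labels `l`, `l'`, `l''` over `A`, `B`, `C`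
contains `q`, and its interior contains no point of `P` with label `0`. -/
structure IsStabbed (K : ℕ) {k : ℕ} (P : ℤ × ℤ → Fin (k + 1) → ℝ × ℝ) (q : ℝ × ℝ)
    (l l' l'' : Fin (k + 1)) (A B C : ℤ × ℤ) : Prop where
  mem_fst : A ∈ grid K
  mem_snd : B ∈ grid K
  mem_apex : C ∈ grid K
  not_strictlyInside : ∀ U ∈ grid K, ¬ StrictlyInside (P A l) (P B l') (P C l'') (P U 0)
  weaklyInside : WeaklyInside (P A l) (P B l') (P C l'') q

variable {K k : ℕ} {P : ℤ × ℤ → Fin (k + 1) → ℝ × ℝ} {A B C g : ℤ × ℤ} {σ : ℝ} {t t' u : ℤ}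
  {q : ℝ × ℝ} {l l' l'' : Fin (k + 1)}

lemma IsStabbed.rotate (h : IsStabbed K P q l l' l'' A B C) :
    IsStabbed K P q l' l'' l B C A :=
  ⟨h.mem_snd, h.mem_apex, h.mem_fst, fun U hU hin => h.not_strictlyInside U hU hin.rotate.rotate,
    h.weaklyInside.rotate⟩

lemma IsStabbed.swap (h : IsStabbed K P q l l' l'' A B C) : IsStabbed K P q l' l l'' B A C :=
  ⟨h.mem_snd, h.mem_fst, h.mem_apex, fun U hU hin => h.not_strictlyInside U hU hin.swap,
    h.weaklyInside.swap⟩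

namespace SeesInOrder

lemma orient_nonpos (hs : SeesInOrder K P g A C σ) (hu : t < u) (hu' : u < t')
    (h : IsStabbed K P q l l' l'' (A + t • g) (A + t' • g) C) :
    σ * orient (P (A + t • g) l) (P (A + t' • g) l') (P (A + u • g) 0) ≤ 0 := by
  by_contra! hpos
  have hU := add_smul_mem_grid hu hu' h.mem_fst h.mem_snd
  have hAB := hs (hu.trans hu') h.mem_fst h.mem_snd l l' l''
  have hAU := hs hu h.mem_fst hU l 0 l''
  have hUB := hs hu' hU h.mem_snd 0 l' l''
  rw [mul_comm] at hAB
  refine h.not_strictlyInside _ hU ⟨mul_pos_trans hAB hpos, ?_, ?_⟩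
  · rw [orient_rotate (P (A + u • g) 0)]
    exact mul_pos_trans hAB hUB
  · rw [← orient_rotate (P C l'')]
    exact mul_pos_trans hAB hAU

lemma ne_zero (hs : SeesInOrder K P g A C σ) (ht : t < t')
    (h : IsStabbed K P q l l' l'' (A + t • g) (A + t' • g) C) : σ ≠ 0 :=
  left_ne_zero_of_mul (hs ht h.mem_fst h.mem_snd l l' l'').ne'

lemma exists_sub_eq_two_pow (hs : SeesInOrder K P g A C σ) (hP : IsHortonClusterGrid K P)
    (hg : g ≠ 0) (ht : t < t') (h : IsStabbed K P q l l' l'' (A + t • g) (A + t' • g) C) :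
    ∃ w : ℕ, t' - t = 2 ^ w := by
  obtain ⟨β, hβ⟩ := hP.exists_pattern A g hg
  obtain ⟨w, r, hr, e⟩ := exists_eq_two_pow_mul_odd_int (sub_pos.2 ht).ne'
  refine ⟨w, ?_⟩
  by_contra hne
  have hw : (0 : ℤ) < 2 ^ w := by positivity
  have hr3 : 3 ≤ r := by
    have : 0 < r := pos_of_mul_pos_right (e ▸ sub_pos.2 ht) hw.le
    have : r ≠ 1 := by rintro rfl; exact hne (e.trans (mul_one _))
    grind
  -- The points at distance `2 ^ w` from the ends lie on different sides of the base.
  have hl : t < t + 2 ^ w ∧ t + 2 ^ w < t' := ⟨by linarith, by nlinarith⟩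
  have hr' : t < t' - 2 ^ w ∧ t' - 2 ^ w < t' := ⟨by nlinarith, by linarith⟩
  have left := hs.orient_nonpos hl.1 hl.2 h
  have right := hs.orient_nonpos hr'.1 hr'.2 h
  have hdvd : (2 : ℤ) ^ (w + 1) ∣ t' - t - 2 ^ w := by
    rw [e, pow_succ, ← mul_sub_one]
    exact mul_dvd_mul_left _ (hr.sub_odd odd_one).two_dvd
  have pattern_left := hβ.orient_pos (add_smul_mem_grid hl.1 hl.2 h.mem_fst h.mem_snd) h.mem_snd
    h.mem_fst hl.2 ⟨by rwa [← sub_sub], -1, by decide, by ring⟩ 0 l' l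
  have pattern_right := hβ.orient_pos h.mem_fst (add_smul_mem_grid hr'.1 hr'.2 h.mem_fst h.mem_snd)
    h.mem_snd hr'.1 ⟨by rwa [sub_right_comm], r, hr, e⟩ l 0 l'
  rw [orient_reverse, mul_neg, ← neg_mul, mul_comm] at pattern_left
  rw [hβ.eq_neg hr e, orient_swap_right] at pattern_right
  exact absurd (mul_nonneg_of_mul_nonpos_of_mul_nonpos (hs.ne_zero ht h) left right)
    (by linarith [mul_pos_trans pattern_left pattern_right])

/-- Two translates of a base either overlap, and then the Horton pattern makes one of the two
triangles contain an endpoint of the other's base, or they are disjoint, and then the triangles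
lie in cones with common apex that meet nowhere else. -/
lemma eq_add_two_pow (hs : SeesInOrder K P g A C σ) (hP : IsHortonClusterGrid K P) (hg : g ≠ 0)
    {w : ℕ} (ht : t < t') (h : IsStabbed K P q l l' l'' (A + t • g) (A + (t + 2 ^ w) • g) C)
    (h' : IsStabbed K P q l l' l'' (A + t' • g) (A + (t' + 2 ^ w) • g) C)
    (hq : q ≠ P C l'') : t' = t + 2 ^ w := by
  have hw : (0 : ℤ) < 2 ^ w := by positivity
  have htw : t < t + 2 ^ w := by linarith
  have htw' : t' < t' + 2 ^ w := by linarith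
  have htt : t < t' + 2 ^ w := by linarith
  have hww : t + 2 ^ w < t' + 2 ^ w := by linarith
  rcases lt_trichotomy t' (t + 2 ^ w) with hlt | heq | hgt
  · obtain ⟨β, hβ⟩ := hP.exists_pattern A g hg
    obtain ⟨f, r, hr, e⟩ := exists_eq_two_pow_mul_odd_int (sub_pos.2 ht).ne'
    have hfw : f < w := by
      have hr0 : 0 < r := pos_of_mul_pos_right (e ▸ sub_pos.2 ht) (by positivity)
      refine (pow_lt_pow_iff_right₀ (one_lt_two : (1 : ℤ) < 2)).1 ?_
      nlinarith [pow_pos (two_pos : (0 : ℤ) < 2) f]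
    have hdvd : (2 : ℤ) ^ (f + 1) ∣ 2 ^ w := pow_dvd_pow _ hfw
    have hodd : Odd ((2 : ℤ) ^ (w - f) - r) :=
      (Int.even_pow.2 ⟨even_two, (Nat.sub_pos_of_lt hfw).ne'⟩).sub_odd hr
    have e' : t + 2 ^ w - t' = 2 ^ f * (2 ^ (w - f) - r) := by
      rw [mul_sub, ← e, ← pow_add, Nat.add_sub_cancel' hfw.le]; ring
    have lower := hs.orient_nonpos ht hlt h
    have upper := hs.orient_nonpos hlt hww h'
    have pattern_lower := hβ.orient_pos h.mem_fst h.mem_snd h'.mem_fst htw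
      ⟨by rwa [add_sub_cancel_left], r, hr, e⟩ l l' 0
    have pattern_upper := hβ.orient_pos h'.mem_fst h'.mem_snd h.mem_snd htw'
      ⟨by rwa [add_sub_cancel_left], _, hodd, e'⟩ l l' 0
    rw [mul_comm] at pattern_lower
    rw [hβ.eq_neg hodd e', neg_mul_comm] at pattern_upper
    exact absurd (mul_nonneg_of_mul_nonpos_of_mul_nonpos (hs.ne_zero htw h) lower upper)
      (by linarith [mul_pos_trans pattern_lower pattern_upper])
  · exact heq
  · refine absurd (eq_apex_of_weaklyInside_of_separated
      (right_ne_zero_of_mul (hs htw h.mem_fst h.mem_snd l l' l'').ne')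
      (right_ne_zero_of_mul (hs htw' h'.mem_fst h'.mem_snd l l' l'').ne')
      h.weaklyInside h'.weaklyInside (hs ht h.mem_fst h'.mem_fst l l l'')
      (hs htt h.mem_fst h'.mem_snd l l' l'') (hs hgt h.mem_snd h'.mem_fst l' l l'')
      (hs hww h.mem_snd h'.mem_snd l' l' l'')) hq

end SeesInOrder

/-- Any two bases in `F` are adjacent translates of each other, so there are at most two. -/
lemma card_stabbed_translates_le_two (hP : IsHortonClusterGrid K P) (hg : g ≠ 0) {w : ℕ}
    (hq : q ≠ P C l'') {F : Finset (ℤ × ℤ)}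
    (hF : ∀ A ∈ F, (∃ σ, SeesInOrder K P g A C σ) ∧
      IsStabbed K P q l l' l'' A (A + (2 ^ w : ℤ) • g) C)
    (hline : ∀ A ∈ F, ∀ B ∈ F, ∃ t : ℤ, B = A + t • g) : F.card ≤ 2 := by
  have adjacent_of_pos : ∀ A ∈ F, ∀ t : ℤ, 0 < t → A + t • g ∈ F → t = 2 ^ w := by
    intro A hA t ht hAt
    obtain ⟨⟨σ, hs⟩, h⟩ := hF A hA
    have h' := (hF _ hAt).2
    rw [add_assoc, ← add_smul] at h'
    simpa using hs.eq_add_two_pow hP hg (t := 0) ht (by simpa using h) h' hq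
  have adjacent : ∀ A ∈ F, ∀ t : ℤ, A + t • g ∈ F → A ≠ A + t • g →
      t = 2 ^ w ∨ t = -2 ^ w := by
    intro A hA t hAt hne
    rcases lt_trichotomy t 0 with ht | rfl | ht
    · exact .inr <| neg_eq_iff_eq_neg.1 <|
        adjacent_of_pos _ hAt (-t) (neg_pos.2 ht) (by rwa [neg_smul, add_neg_cancel_right])
    · simp at hne
    · exact .inl (adjacent_of_pos A hA t ht hAt)
  by_contra! hcard
  obtain ⟨A, hA, B, hB, C, hC, hAB, hAC, hBC⟩ := Finset.two_lt_card.1 hcard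
  obtain ⟨t, rfl⟩ := hline A hA B hB
  obtain ⟨u, rfl⟩ := hline A hA C hC
  have hC' : A + u • g = A + t • g + (u - t) • g := by module
  have h₁ := adjacent A hA t hB hAB
  have h₂ := adjacent A hA u hC hAC
  have h₃ := adjacent _ hB (u - t) (hC' ▸ hC) (hC' ▸ hBC)
  have hw : (0 : ℤ) < 2 ^ w := by positivity
  have htu : t ≠ u := by rintro rfl; exact hBC rfl
  omega

end Fibers

section ThinTriangles

variable {A B C g v : ℤ × ℤ}

lemma cross_swap (u v : ℤ × ℤ) : cross v u = -cross u v := by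
  simp only [cross]; ring

lemma ne_zero_of_isCoprime (hg : IsCoprime g.1 g.2) : g ≠ 0 := by
  rintro rfl
  exact not_isCoprime_zero_zero hg

lemma isCoprime_of_cross_eq_one {u v : ℤ × ℤ} (h : cross u v = 1) : IsCoprime v.1 v.2 :=
  ⟨-u.2, u.1, by rw [cross] at h; linarith⟩

lemma exists_eq_smul_isCoprime (hv : v ≠ 0) :
    ∃ (n : ℤ) (g : ℤ × ℤ), 0 < n ∧ IsCoprime g.1 g.2 ∧ v = n • g := by
  have hgcd : 0 < Int.gcd v.1 v.2 :=
    Int.gcd_pos_iff.2 <| not_and_or.1 fun h => hv (Prod.ext h.1 h.2)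
  obtain ⟨x, y, hxy, hx, hy⟩ := Int.exists_gcd_one hgcd
  exact ⟨_, (x, y), mod_cast hgcd, Int.isCoprime_iff_gcd_eq_one.2 hxy,
    Prod.ext (hx.trans (mul_comm _ _)) (hy.trans (mul_comm _ _))⟩

lemma cross_eq_of_unimodular {g' u : ℤ × ℤ} (hg' : cross g g' = 1) (a b a' b' : ℤ)
    (hu : u = a • g + b • g') (hv : v = a' • g + b' • g') : cross u v = a * b' - b * a' := by
  subst hu hv
  simp only [cross, Prod.fst_add, Prod.snd_add, Prod.smul_fst, Prod.smul_snd, smul_eq_mul]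
    at hg' ⊢
  linear_combination (a * b' - b * a') * hg'

lemma exists_unimodular_coordinates (hg : IsCoprime g.1 g.2) (v : ℤ × ℤ) :
    ∃ (g' : ℤ × ℤ) (c : ℤ), cross g g' = 1 ∧ v = c • g + cross g v • g' := by
  obtain ⟨a, b, h⟩ := hg
  refine ⟨(-b, a), a * v.1 + b * v.2, by rw [cross]; linarith, ?_⟩
  ext <;> simp only [cross, Prod.fst_add, Prod.snd_add, Prod.smul_fst, Prod.smul_snd, smul_eq_mul]
  · linear_combination -v.1 * h
  · linear_combination -v.2 * h

lemma exists_eq_smul_of_cross_eq_zero (hg : IsCoprime g.1 g.2) (h : cross g v = 0) :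
    ∃ t : ℤ, v = t • g := by
  obtain ⟨g', c, -, hv⟩ := exists_unimodular_coordinates hg v
  exact ⟨c, by rwa [h, zero_smul, add_zero] at hv⟩

lemma exists_reduced_unimodular_coordinates (hg : IsCoprime g.1 g.2) (hv : 0 < cross g v) :
    ∃ (g' : ℤ × ℤ) (c : ℤ), cross g g' = 1 ∧ c ∈ Set.Ico 0 (cross g v) ∧
      v = c • g + cross g v • g' := by
  obtain ⟨g', c, hg', h⟩ := exists_unimodular_coordinates hg v
  refine ⟨g' + (c / cross g v) • g, c % cross g v, ?_,
    ⟨Int.emod_nonneg _ hv.ne', Int.emod_lt_of_pos _ hv⟩, ?_⟩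
  · simp only [cross, Prod.fst_add, Prod.snd_add, Prod.smul_fst, Prod.smul_snd, smul_eq_mul]
      at hg' ⊢
    linarith
  · have hc : c = c % cross g v + cross g v * (c / cross g v) := (Int.emod_add_mul_ediv _ _).symm
    calc v = c • g + cross g v • g' := h
      _ = (c % cross g v + cross g v * (c / cross g v)) • g + cross g v • g' := by rw [← hc]
      _ = _ := by module

/-- The position of an apex `C` relative to the lattice line `A + ℤ • g`: `Sum.inl d` says that
`C` is off the line, at one of the four nearest nonzero lattice distances `d`, and `Sum.inr v`
that it is on the line, and that `2 ^ v` is the largest power of two dividing the number of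
lattice steps from `A` to `C`. -/
def HasApexAt (g A C : ℤ × ℤ) : ℤ ⊕ ℕ → Prop
  | .inl d => d ≠ 0 ∧ |d| ≤ 2 ∧ cross g (C - A) = d
  | .inr v => ∃ r : ℤ, Odd r ∧ C = A + (2 ^ v * r) • g

/-- The step between two lattice points of the line `A + ℤ • g` with respect to which an apex has
the same position. -/
def apexStep (g : ℤ × ℤ) : ℤ ⊕ ℕ → ℤ × ℤ
  | .inl _ => g
  | .inr v => (2 ^ (v + 1) : ℤ) • g

/-- A lattice triangle, possibly degenerate, whose apex `C` is on or close to the line through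
its base `AB`. -/
def IsThin (A B C : ℤ × ℤ) : Prop :=
  ∃ (g : ℤ × ℤ) (x : ℤ ⊕ ℕ) (n : ℤ), IsCoprime g.1 g.2 ∧ 0 < n ∧ HasApexAt g A C x ∧
    B = A + n • apexStep g x

lemma upToPerm_isThin_of_collinear (hAB : A ≠ B) (hAC : A ≠ C) (hBC : B ≠ C)
    (h : cross (B - A) (C - A) = 0) : UpToPerm IsThin A B C := by
  obtain ⟨n, g, hn, hg, hB⟩ := exists_eq_smul_isCoprime (sub_ne_zero.2 hAB.symm)
  obtain ⟨m, hC⟩ : ∃ m : ℤ, C - A = m • g := by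
    refine exists_eq_smul_of_cross_eq_zero hg ?_
    have : n * cross g (C - A) = 0 := by
      rw [← h, hB]
      simp only [cross, Prod.smul_fst, Prod.smul_snd, smul_eq_mul]; ring
    exact (mul_eq_zero.1 this).resolve_left hn.ne'
  rw [sub_eq_iff_eq_add'] at hB hC
  have hm0 : 0 ≠ m := by
    rintro rfl
    exact hAC (by rw [hC, zero_smul, add_zero])
  have hnm : n ≠ m := by
    rintro rfl
    exact hBC (hB.trans hC.symm)
  have key := (upToPerm_splitsOffAt hn.ne hm0 hnm).map (r := IsThin) (fun t : ℤ => A + t • g) <| by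
    rintro x y z ⟨hxy, f, ⟨l, hl⟩, r, hr, hz⟩
    refine .of ⟨g, .inr f, l, hg, ?_, ⟨r, hr, ?_⟩, ?_⟩
    · exact pos_of_mul_pos_right (hl ▸ sub_pos.2 hxy) (by positivity)
    · rw [← hz]; module
    · rw [eq_add_of_sub_eq' hl, apexStep]; module
  simpa only [zero_smul, add_zero, ← hB, ← hC] using key

lemma upToPerm_isThin_of_interior_eq_empty (h : 0 < cross (B - A) (C - A))
    (hempty : ∀ U, ¬ (0 < cross (B - A) (U - A) ∧ 0 < cross (C - B) (U - B) ∧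
      0 < cross (A - C) (U - C))) : UpToPerm IsThin A B C := by
  obtain ⟨n, g, hn, hg, hB⟩ : ∃ (n : ℤ) (g : ℤ × ℤ), 0 < n ∧ IsCoprime g.1 g.2 ∧ B - A = n • g :=
    exists_eq_smul_isCoprime (by rintro h0; simp [h0, cross] at h)
  have hcross : cross (B - A) (C - A) = n * cross g (C - A) := by
    rw [hB]
    simp only [cross, Prod.smul_fst, Prod.smul_snd, smul_eq_mul]; ring
  have hd : 0 < cross g (C - A) := pos_of_mul_pos_right (hcross ▸ h) hn.le
  rw [sub_eq_iff_eq_add'] at hB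
  rcases le_or_gt (cross g (C - A)) 2 with hd2 | hd2
  · exact .of ⟨g, .inl _, n, hg, hn, ⟨hd.ne', abs_le.2 ⟨by linarith, hd2⟩, rfl⟩, hB⟩
  obtain ⟨g', c, hg', ⟨hc, hcd⟩, hC⟩ := exists_reduced_unimodular_coordinates hg hd
  rw [sub_eq_iff_eq_add'] at hC
  generalize cross g (C - A) = d at *
  subst hB hC
  have hlarge : ¬ (2 ≤ n ∨ 2 ≤ c) := by
    intro hlarge
    refine hempty (A + g + g') ⟨?_, ?_, ?_⟩
    · rw [cross_eq_of_unimodular hg' n 0 1 1 (by module) (by module)]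
      linarith
    · rw [cross_eq_of_unimodular hg' (c - n) d (1 - n) 1 (by module) (by module)]
      rcases hlarge with hn2 | hc2 <;> nlinarith
    · rw [cross_eq_of_unimodular hg' (-c) (-d) (1 - c) (1 - d) (by module) (by module)]
      linarith
  obtain rfl : n = 1 := by omega
  obtain rfl | rfl : c = 0 ∨ c = 1 := by omega
  · exact (UpToPerm.of ⟨g', .inl (-1), d, isCoprime_of_cross_eq_one hg', hd,
      ⟨by decide, by decide, cross_eq_of_unimodular hg' 0 1 1 0 (by module) (by module)⟩,
      by rw [apexStep]; module⟩ : UpToPerm IsThin A _ _).rotate.rotate.swap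
  · exact (UpToPerm.of ⟨g', .inl 1, d, isCoprime_of_cross_eq_one hg', hd,
      ⟨by decide, by decide, cross_eq_of_unimodular hg' 0 1 (-1) 0 (by module) (by module)⟩,
      by rw [apexStep]; module⟩ : UpToPerm IsThin _ _ A).rotate.rotate

lemma HasApexAt.exists_eq_add_smul {A' : ℤ × ℤ} {x : ℤ ⊕ ℕ} (hg : IsCoprime g.1 g.2)
    (h : HasApexAt g A C x) (h' : HasApexAt g A' C x) : ∃ t : ℤ, A' = A + t • apexStep g x := by
  rcases x with d | v
  · obtain ⟨t, ht⟩ := exists_eq_smul_of_cross_eq_zero (v := A' - A) hg <| by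
      have := h.2.2.trans h'.2.2.symm
      simp only [cross, Prod.fst_sub, Prod.snd_sub] at this ⊢
      linarith
    exact ⟨t, eq_add_of_sub_eq' ht⟩
  · obtain ⟨r, hr, hC⟩ := h
    obtain ⟨r', hr', hC'⟩ := h'
    obtain ⟨t, ht⟩ := hr.sub_odd hr'
    refine ⟨t, ?_⟩
    calc A' = A + (2 ^ v * (r - r')) • g := by
          rw [eq_sub_of_add_eq hC'.symm, hC]; module
      _ = A + t • apexStep g (.inr v) := by rw [apexStep, ht, pow_succ]; module

lemma apexStep_ne_zero (hg : IsCoprime g.1 g.2) (x : ℤ ⊕ ℕ) : apexStep g x ≠ 0 := by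
  rcases x with d | v
  · exact ne_zero_of_isCoprime hg
  · exact smul_ne_zero (by positivity) (ne_zero_of_isCoprime hg)

variable {K k : ℕ} {P : ℤ × ℤ → Fin (k + 1) → ℝ × ℝ} {q : ℝ × ℝ} {l l' l'' : Fin (k + 1)}

lemma IsHortonClusterGrid.orient_neg (hP : IsHortonClusterGrid K P) (hA : A ∈ grid K)
    (hB : B ∈ grid K) (hC : C ∈ grid K) (h : cross (B - A) (C - A) < 0)
    (l l' l'' : Fin (k + 1)) : orient (P A l) (P B l') (P C l'') < 0 := by
  rw [cross_swap, neg_lt_zero] at h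
  have hpos := hP.orient_pos hA hC hB h l l'' l'
  rwa [orient_swap_right, neg_pos] at hpos

lemma IsHortonClusterGrid.exists_seesInOrder (hP : IsHortonClusterGrid K P)
    (hg : g ≠ 0) (hC : C ∈ grid K) {x : ℤ ⊕ ℕ} (hx : HasApexAt g A C x) :
    ∃ σ, SeesInOrder K P (apexStep g x) A C σ := by
  rcases x with d | v
  · obtain ⟨hd, -, rfl⟩ := hx
    have hcross (t t' : ℤ) : cross (A + t' • g - (A + t • g)) (C - (A + t • g)) =
        (t' - t) * cross g (C - A) := by
      simp only [cross, Prod.fst_add, Prod.snd_add, Prod.fst_sub, Prod.snd_sub, Prod.smul_fst,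
        Prod.smul_snd, smul_eq_mul]
      ring
    rcases hd.lt_or_gt with hd | hd
    · refine ⟨-1, fun t t' ht hA hB l l' l'' => ?_⟩
      have := hP.orient_neg hA hB hC
        (by rw [apexStep, hcross]; exact mul_neg_of_pos_of_neg (sub_pos.2 ht) hd) l l' l''
      linarith
    · refine ⟨1, fun t t' ht hA hB l l' l'' => ?_⟩
      rw [one_mul]
      exact hP.orient_pos hA hB hC
        (by rw [apexStep, hcross]; exact mul_pos (sub_pos.2 ht) hd) l l' l''
  · obtain ⟨r, hr, rfl⟩ := hx
    obtain ⟨β, hβ⟩ := hP.exists_pattern A g hg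
    refine ⟨β v (2 ^ v * r), fun t t' ht hA hB l l' l'' => ?_⟩
    rw [apexStep, smul_smul] at hA hB ⊢
    rw [smul_smul]
    exact hβ.orient_pos hA hB hC (mul_lt_mul_of_pos_right ht (by positivity))
      ⟨⟨t' - t, by ring⟩, r - 2 * t, hr.sub_even (even_two_mul t), by ring⟩ l l' l''

lemma IsHortonClusterGrid.exists_orient_sign_of_isThin (hP : IsHortonClusterGrid K P)
    (hA : A ∈ grid K) (hB : B ∈ grid K) (hC : C ∈ grid K) (h : IsThin A B C) :
    ∃ σ, ∀ l l' l'', 0 < σ * orient (P A l) (P B l') (P C l'') := by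
  obtain ⟨g, x, n, hg, hn, hx, rfl⟩ := h
  obtain ⟨σ, hs⟩ := hP.exists_seesInOrder (ne_zero_of_isCoprime hg) hC hx
  have := hs (t := 0) hn (by rwa [zero_smul, add_zero]) hB
  rw [zero_smul, add_zero] at this
  exact ⟨σ, this⟩

lemma IsHortonClusterGrid.orient_ne_zero_of_isThin (hP : IsHortonClusterGrid K P)
    (hA : A ∈ grid K) (hB : B ∈ grid K) (hC : C ∈ grid K) (h : IsThin A B C)
    (l l' l'' : Fin (k + 1)) : orient (P A l) (P B l') (P C l'') ≠ 0 := by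
  obtain ⟨σ, hσ⟩ := hP.exists_orient_sign_of_isThin hA hB hC h
  exact right_ne_zero_of_mul (hσ l l' l'').ne'

lemma IsHortonClusterGrid.exists_orient_sign_of_upToPerm_isThin (hP : IsHortonClusterGrid K P)
    (hA : A ∈ grid K) (hB : B ∈ grid K) (hC : C ∈ grid K) (h : UpToPerm IsThin A B C) :
    ∃ σ, ∀ l l' l'', 0 < σ * orient (P A l) (P B l') (P C l'') := by
  induction h with
  | of h => exact hP.exists_orient_sign_of_isThin hA hB hC h
  | rotate _ ih =>
    obtain ⟨σ, hσ⟩ := ih hC hA hB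
    exact ⟨σ, fun l l' l'' => by rw [orient_rotate]; exact hσ l'' l l'⟩
  | swap _ ih =>
    obtain ⟨σ, hσ⟩ := ih hB hA hC
    exact ⟨-σ, fun l l' l'' => by rw [orient_swap, neg_mul_neg]; exact hσ l' l l''⟩

lemma IsHortonClusterGrid.exists_orient_sign (hP : IsHortonClusterGrid K P) (hA : A ∈ grid K)
    (hB : B ∈ grid K) (hC : C ∈ grid K) (hAB : A ≠ B) (hAC : A ≠ C) (hBC : B ≠ C) :
    ∃ σ, ∀ l l' l'', 0 < σ * orient (P A l) (P B l') (P C l'') := by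
  rcases lt_trichotomy (cross (B - A) (C - A)) 0 with h | h | h
  · exact ⟨-1, fun l l' l'' => mul_pos_of_neg_of_neg neg_one_lt_zero
      (hP.orient_neg hA hB hC h l l' l'')⟩
  · exact hP.exists_orient_sign_of_upToPerm_isThin hA hB hC
      (upToPerm_isThin_of_collinear hAB hAC hBC h)
  · exact ⟨1, fun l l' l'' => mul_pos one_pos (hP.orient_pos hA hB hC h l l' l'')⟩

lemma IsStabbed.upToPerm_isThin_of_pos (hP : IsHortonClusterGrid K P)
    (hs : IsStabbed K P q l l' l'' A B C) (h : 0 < cross (B - A) (C - A)) :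
    UpToPerm IsThin A B C := by
  refine upToPerm_isThin_of_interior_eq_empty h fun U ⟨hAB, hBC, hCA⟩ => ?_
  have hU : U ∈ grid K := by
    refine mem_grid_of_weighted_average hs.mem_fst hs.mem_snd hs.mem_apex hBC.le hCA.le hAB.le
      (by positivity) ?_
    ext <;> simp only [cross, Prod.fst_add, Prod.snd_add, Prod.fst_sub, Prod.snd_sub,
      Prod.smul_fst, Prod.smul_snd, smul_eq_mul] <;> ring
  have hpos := hP.orient_pos hs.mem_fst hs.mem_snd hs.mem_apex h l l' l''
  exact hs.not_strictlyInside U hU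
    ⟨mul_pos hpos (hP.orient_pos hs.mem_fst hs.mem_snd hU hAB l l' 0),
      mul_pos hpos (hP.orient_pos hs.mem_snd hs.mem_apex hU hBC l' l'' 0),
      mul_pos hpos (hP.orient_pos hs.mem_apex hs.mem_fst hU hCA l'' l 0)⟩

lemma IsStabbed.upToPerm_isThin (hP : IsHortonClusterGrid K P)
    (hs : IsStabbed K P q l l' l'' A B C) (hAB : A ≠ B) (hAC : A ≠ C) (hBC : B ≠ C) :
    UpToPerm IsThin A B C := by
  rcases lt_trichotomy (cross (B - A) (C - A)) 0 with h | h | h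
  · refine (hs.swap.upToPerm_isThin_of_pos hP ?_).swap
    simp only [cross, Prod.fst_sub, Prod.snd_sub] at h ⊢
    linarith
  · exact upToPerm_isThin_of_collinear hAB hAC hBC h
  · exact hs.upToPerm_isThin_of_pos hP h

end ThinTriangles

section Counting

variable {K k j w : ℕ} {g A B C : ℤ × ℤ} {q : ℝ × ℝ}

lemma sum_four_pow_mul_two_pow_mul_sq (K : ℕ) :
    ∑ j ∈ Finset.range K, 4 ^ j * 2 ^ (K - j) * (K - j) ^ 2 + 2 ^ K * (K ^ 2 + 4 * K + 6) =
      6 * 4 ^ K := by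
  induction K with
  | zero => simp
  | succ K ih =>
    have hsum : ∑ j ∈ Finset.range K, 4 ^ (j + 1) * 2 ^ (K + 1 - (j + 1)) * (K + 1 - (j + 1)) ^ 2 =
        4 * ∑ j ∈ Finset.range K, 4 ^ j * 2 ^ (K - j) * (K - j) ^ 2 := by
      rw [Finset.mul_sum]
      refine Finset.sum_congr rfl fun j _ => ?_
      rw [Nat.add_sub_add_right]; ring
    rw [Finset.sum_range_succ', hsum, Nat.sub_zero, pow_succ 4, ← mul_assoc, ← ih]
    ring

/-- The primitive lattice vectors with maximum norm in `[2 ^ j, 2 ^ (j + 1))`. -/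
def primitiveVectors (j : ℕ) : Finset (ℤ × ℤ) :=
  {g ∈ Finset.Ioo (-2 ^ (j + 1)) (2 ^ (j + 1)) ×ˢ Finset.Ioo (-2 ^ (j + 1)) (2 ^ (j + 1)) |
    IsCoprime g.1 g.2 ∧ 2 ^ j ≤ max |g.1| |g.2|}

lemma card_primitiveVectors_le (j : ℕ) : (primitiveVectors j).card ≤ 16 * 4 ^ j := by
  have h : (Finset.Ioo (-2 ^ (j + 1)) ((2 : ℤ) ^ (j + 1))).card ≤ 4 * 2 ^ j := by
    rw [Int.card_Ioo, Int.toNat_le]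
    push_cast
    linarith [pow_succ (2 : ℤ) j]
  calc (primitiveVectors j).card ≤ (4 * 2 ^ j) * (4 * 2 ^ j) := by
        refine (Finset.card_filter_le _ _).trans ?_
        rw [Finset.card_product]
        exact Nat.mul_le_mul h h
    _ = 16 * 4 ^ j := by
        rw [show 4 = 2 * 2 from rfl, mul_pow]; ring

lemma mem_primitiveVectors :
    g ∈ primitiveVectors j ↔
      max |g.1| |g.2| < 2 ^ (j + 1) ∧ IsCoprime g.1 g.2 ∧ 2 ^ j ≤ max |g.1| |g.2| := by
  rw [primitiveVectors, Finset.mem_filter, Finset.mem_product, Finset.mem_Ioo, Finset.mem_Ioo,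
    ← abs_lt, ← abs_lt, max_lt_iff]

lemma exists_mem_primitiveVectors (hg : IsCoprime g.1 g.2) : ∃ j, g ∈ primitiveVectors j := by
  have hm : max g.1.natAbs g.2.natAbs ≠ 0 := fun h =>
    ne_zero_of_isCoprime hg (Prod.ext (show g.1 = 0 by omega) (show g.2 = 0 by omega))
  refine ⟨Nat.log 2 (max g.1.natAbs g.2.natAbs), mem_primitiveVectors.2 ⟨?_, hg, ?_⟩⟩
  · rw [Int.abs_eq_natAbs, Int.abs_eq_natAbs]
    exact_mod_cast Nat.lt_pow_succ_log_self one_lt_two _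
  · rw [Int.abs_eq_natAbs, Int.abs_eq_natAbs]
    exact_mod_cast Nat.pow_log_le_self 2 hm

lemma lt_of_mem_primitiveVectors (hg : g ∈ primitiveVectors j) (hA : A ∈ grid K)
    (hB : A + (2 ^ w : ℤ) • g ∈ grid K) : j + w < K := by
  simp only [mem_grid, Finset.mem_Ico, Prod.fst_add, Prod.snd_add, Prod.smul_fst, Prod.smul_snd,
    smul_eq_mul] at hA hB
  have hlt : max |2 ^ w * g.1| |2 ^ w * g.2| < (2 : ℤ) ^ K := by
    rw [max_lt_iff, abs_lt, abs_lt]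
    constructor <;> constructor <;> linarith [hA.1, hA.2, hB.1, hB.2]
  have hw : (0 : ℤ) ≤ 2 ^ w := by positivity
  rw [abs_mul, abs_mul, abs_of_nonneg hw, ← mul_max_of_nonneg _ _ hw] at hlt
  refine (pow_lt_pow_iff_right₀ (one_lt_two : (1 : ℤ) < 2)).1 ?_
  calc (2 : ℤ) ^ (j + w) = 2 ^ w * 2 ^ j := by ring
    _ ≤ 2 ^ w * max |g.1| |g.2| := by
        gcongr
        exact (mem_primitiveVectors.1 hg).2.2
    _ < 2 ^ K := hlt

lemma card_le_two_pow_of_separated {ι : Type*} {F : Finset ι} {f : ι → ℤ} (hj : j ≤ K)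
    (hf : ∀ x ∈ F, f x ∈ Finset.Ico 0 (2 ^ K))
    (hsep : ∀ x ∈ F, ∀ y ∈ F, x ≠ y → 2 ^ j ≤ |f x - f y|) : F.card ≤ 2 ^ (K - j) := by
  have h2j : (0 : ℤ) < 2 ^ j := by positivity
  have hcard : (Finset.Ico (0 : ℤ) (2 ^ (K - j))).card = 2 ^ (K - j) := by
    rw [Int.card_Ico, sub_zero]
    exact_mod_cast Int.toNat_natCast (2 ^ (K - j))
  rw [← hcard]
  refine Finset.card_le_card_of_injOn (fun x => f x / 2 ^ j) (fun x hx => ?_)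
    fun x hx y hy hxy => ?_
  · obtain ⟨h0, hK⟩ := Finset.mem_Ico.1 (hf x hx)
    refine Finset.mem_Ico.2 ⟨Int.ediv_nonneg h0 h2j.le, Int.ediv_lt_of_lt_mul h2j ?_⟩
    rwa [← pow_add, Nat.sub_add_cancel hj]
  · by_contra hne
    refine (hsep x hx y hy hne).not_gt ?_
    have hx' := Int.emod_add_mul_ediv (f x) (2 ^ j)
    have hy' := Int.emod_add_mul_ediv (f y) (2 ^ j)
    rw [show f x / 2 ^ j = f y / 2 ^ j from hxy] at hx'
    have := Int.emod_nonneg (f x) h2j.ne'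
    have := Int.emod_nonneg (f y) h2j.ne'
    have := Int.emod_lt_of_pos (f x) h2j
    have := Int.emod_lt_of_pos (f y) h2j
    rw [abs_lt]
    constructor <;> linarith

lemma card_grid_line_le (hj : j ≤ K) (hg : g ∈ primitiveVectors j) (s : ℤ) :
    {C ∈ grid K | cross g C = s}.card ≤ 2 ^ (K - j) := by
  obtain ⟨-, hcop, hmax⟩ := mem_primitiveVectors.1 hg
  have hsep : ∀ C ∈ {C ∈ grid K | cross g C = s}, ∀ C' ∈ {C ∈ grid K | cross g C = s}, C ≠ C' →
      |g.1| ≤ |C.1 - C'.1| ∧ |g.2| ≤ |C.2 - C'.2| := by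
    intro C hC C' hC' hne
    have hcross := (Finset.mem_filter.1 hC).2.trans (Finset.mem_filter.1 hC').2.symm
    obtain ⟨t, ht⟩ := exists_eq_smul_of_cross_eq_zero (v := C - C') hcop <| by
      simp only [cross, Prod.fst_sub, Prod.snd_sub] at hcross ⊢
      linarith
    have ht0 : t ≠ 0 := by
      rintro rfl
      exact hne (sub_eq_zero.1 (by rw [ht, zero_smul]))
    rw [← Prod.fst_sub, ← Prod.snd_sub, ht, Prod.smul_fst, Prod.smul_snd, smul_eq_mul, smul_eq_mul,
      abs_mul, abs_mul]
    exact ⟨le_mul_of_one_le_left (abs_nonneg _) (Int.one_le_abs ht0),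
      le_mul_of_one_le_left (abs_nonneg _) (Int.one_le_abs ht0)⟩
  rcases le_max_iff.1 hmax with h | h
  · exact card_le_two_pow_of_separated (f := Prod.fst) hj
      (fun C hC => (mem_grid.1 (Finset.mem_filter.1 hC).1).1)
      fun C hC C' hC' hne => h.trans (hsep C hC C' hC' hne).1
  · exact card_le_two_pow_of_separated (f := Prod.snd) hj
      (fun C hC => (mem_grid.1 (Finset.mem_filter.1 hC).1).2)
      fun C hC C' hC' hne => h.trans (hsep C hC C' hC' hne).2

/-- The grid points in a strip around the line through `q` in direction `g` that is wide enough
to contain the apex of every thin triangle that contains `q` and has a base in direction `g`. -/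
def strip (K : ℕ) (q : ℝ × ℝ) (g : ℤ × ℤ) : Finset (ℤ × ℤ) :=
  {C ∈ grid K | |(cross g C : ℝ) - (g.1 * q.2 - g.2 * q.1)| ≤ 3}

lemma card_strip_le (hj : j ≤ K) (hg : g ∈ primitiveVectors j) (q : ℝ × ℝ) :
    (strip K q g).card ≤ 7 * 2 ^ (K - j) := by
  set s : ℝ := g.1 * q.2 - g.2 * q.1 with hs
  have hcover : strip K q g ⊆
      (Finset.Icc (⌈s⌉ - 3) (⌊s⌋ + 3)).biUnion fun d => {C ∈ grid K | cross g C = d} := by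
    intro C hC
    rw [strip, Finset.mem_filter, ← hs, abs_le] at hC
    obtain ⟨h, h₁, h₂⟩ := hC
    refine Finset.mem_biUnion.2 ⟨cross g C, Finset.mem_Icc.2 ⟨?_, ?_⟩, Finset.mem_filter.2 ⟨h, rfl⟩⟩
    · rw [sub_le_iff_le_add, Int.ceil_le]
      push_cast
      linarith
    · rw [← sub_le_iff_le_add, Int.le_floor]
      push_cast
      linarith
  refine (Finset.card_le_card hcover).trans <|
    (Finset.card_biUnion_le_card_mul _ _ _ fun d _ => card_grid_line_le hj hg d).trans ?_
  gcongr
  rw [Int.card_Icc]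
  have := Int.floor_le_ceil s
  omega

/-- The possible positions in `HasApexAt` of an apex in the grid, where `n` bounds the power of
two in `Sum.inr`. -/
def nearbyPositions (n : ℕ) : Finset (ℤ ⊕ ℕ) :=
  Finset.disjSum {-2, -1, 1, 2} (Finset.range n)

lemma card_nearbyPositions (n : ℕ) : (nearbyPositions n).card = 4 + n := by
  rw [nearbyPositions, Finset.card_disjSum, Finset.card_range]
  rfl

/-- The data of a thin triangle up to translation of its base along itself: the direction, the
apex, its position, and the exponent `w` if the base consists of `2 ^ w` steps. -/
def flags (K : ℕ) (q : ℝ × ℝ) : Finset ((ℤ × ℤ) × (ℤ × ℤ) × (ℤ ⊕ ℕ) × ℕ) :=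
  (Finset.range K).biUnion fun j => (primitiveVectors j).biUnion fun g =>
    {g} ×ˢ strip K q g ×ˢ nearbyPositions (K - j) ×ˢ Finset.range (K - j)

lemma card_flags_le (K : ℕ) (q : ℝ × ℝ) : (flags K q).card ≤ 3360 * 4 ^ K := by
  have hlayer : ∀ j ∈ Finset.range K, ((primitiveVectors j).biUnion fun g =>
      ({g} : Finset (ℤ × ℤ)) ×ˢ strip K q g ×ˢ
        nearbyPositions (K - j) ×ˢ Finset.range (K - j)).card ≤
      560 * (4 ^ j * 2 ^ (K - j) * (K - j) ^ 2) := by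
    intro j hj
    rw [Finset.mem_range] at hj
    calc _ ≤ (primitiveVectors j).card * (7 * 2 ^ (K - j) * (5 * (K - j) * (K - j))) := by
          refine Finset.card_biUnion_le_card_mul _ _ _ fun g hg => ?_
          rw [Finset.card_product, Finset.card_product, Finset.card_product, Finset.card_singleton,
            one_mul, card_nearbyPositions, Finset.card_range]
          gcongr
          · exact card_strip_le hj.le hg q
          · omega
      _ ≤ 16 * 4 ^ j * (7 * 2 ^ (K - j) * (5 * (K - j) * (K - j))) := by
          gcongr
          exact card_primitiveVectors_le j
      _ = _ := by ring
  calc (flags K q).card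
      ≤ ∑ j ∈ Finset.range K, 560 * (4 ^ j * 2 ^ (K - j) * (K - j) ^ 2) :=
        Finset.card_biUnion_le.trans (Finset.sum_le_sum hlayer)
    _ ≤ 3360 * 4 ^ K := by
        rw [← Finset.mul_sum]
        linarith [sum_four_pow_mul_two_pow_mul_sq K, Nat.zero_le (2 ^ K * (K ^ 2 + 4 * K + 6))]

variable {P : ℤ × ℤ → Fin (k + 1) → ℝ × ℝ} {l l' l'' : Fin (k + 1)} {x : ℤ ⊕ ℕ}

lemma IsHortonClusterGrid.abs_cross_sub_le (hP : IsHortonClusterGrid K P) (hA : A ∈ grid K)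
    (hg : max |g.1| |g.2| < 2 ^ K) (l : Fin (k + 1)) :
    |g.1 * (P A l).2 - g.2 * (P A l).1 - cross g A| ≤ 1 / 2 := by
  rw [max_lt_iff] at hg
  have h₁ : |(g.1 : ℝ)| ≤ 2 ^ K := by exact_mod_cast hg.1.le
  have h₂ : |(g.2 : ℝ)| ≤ 2 ^ K := by exact_mod_cast hg.2.le
  obtain ⟨hx, hy⟩ := hP.abs_sub_le hA l
  calc |g.1 * (P A l).2 - g.2 * (P A l).1 - cross g A|
      = |g.1 * ((P A l).2 - A.2) - g.2 * ((P A l).1 - A.1)| := by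
        congr 1
        push_cast [cross]
        ring
    _ ≤ |(g.1 : ℝ)| * |(P A l).2 - A.2| + |(g.2 : ℝ)| * |(P A l).1 - A.1| := by
        rw [← abs_mul, ← abs_mul]
        exact abs_sub _ _
    _ ≤ 2 ^ K * (1 / 2 ^ (K + 2)) + 2 ^ K * (1 / 2 ^ (K + 2)) := by gcongr
    _ = 1 / 2 := by
        rw [pow_add]
        field_simp
        norm_num

lemma IsStabbed.apex_mem_strip (hP : IsHortonClusterGrid K P)
    (hs : IsStabbed K P q l l' l'' A B C) (h0 : orient (P A l) (P B l') (P C l'') ≠ 0)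
    (hg : max |g.1| |g.2| < 2 ^ K) (hAC : |cross g A - cross g C| ≤ 2)
    (hBC : |cross g B - cross g C| ≤ 2) : C ∈ strip K q g := by
  refine Finset.mem_filter.2 ⟨hs.mem_apex, ?_⟩
  let φ : ℝ × ℝ →ₗ[ℝ] ℝ :=
    (g.1 : ℝ) • LinearMap.snd ℝ ℝ ℝ - (g.2 : ℝ) • LinearMap.fst ℝ ℝ ℝ
  suffices convexHull ℝ {P A l, P B l', P C l''} ⊆ φ ⁻¹' Metric.closedBall (cross g C : ℝ) 3 by
    have := this ((mem_convexHull_triangle h0).2 hs.weaklyInside)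
    rwa [Set.mem_preimage, Metric.mem_closedBall, dist_comm] at this
  have mem_of_close {D : ℤ × ℤ} (hD : D ∈ grid K) (hDC : |cross g D - cross g C| ≤ 2)
      (m : Fin (k + 1)) : P D m ∈ φ ⁻¹' Metric.closedBall (cross g C : ℝ) 3 := by
    have h₁ : |φ (P D m) - cross g D| ≤ 1 / 2 := hP.abs_cross_sub_le hD hg m
    have h₂ : |(cross g D : ℝ) - cross g C| ≤ 2 := by exact_mod_cast hDC
    rw [Set.mem_preimage, Metric.mem_closedBall, Real.dist_eq]
    linarith [abs_sub_le (φ (P D m)) (cross g D) (cross g C)]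
  refine convexHull_min ?_ ((convex_closedBall _ _).linear_preimage φ)
  rintro p (rfl | rfl | rfl)
  · exact mem_of_close hs.mem_fst hAC l
  · exact mem_of_close hs.mem_snd hBC l'
  · exact mem_of_close hs.mem_apex (by simp) l''

lemma HasApexAt.abs_cross_sub_le (hx : HasApexAt g A C x) : |cross g A - cross g C| ≤ 2 := by
  rcases x with d | v
  · obtain ⟨-, hd, rfl⟩ := hx
    convert hd using 1
    rw [← abs_neg]
    congr 1
    simp only [cross, Prod.fst_sub, Prod.snd_sub]
    ring
  · obtain ⟨r, -, rfl⟩ := hx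
    have : cross g (A + (2 ^ v * r) • g) = cross g A := by
      simp only [cross, Prod.fst_add, Prod.snd_add, Prod.smul_fst, Prod.smul_snd, smul_eq_mul]
      ring
    rw [this, sub_self, abs_zero]
    exact zero_le_two

lemma cross_add_smul_apexStep (g A : ℤ × ℤ) (n : ℤ) (x : ℤ ⊕ ℕ) :
    cross g (A + n • apexStep g x) = cross g A := by
  rcases x with d | v <;>
    simp only [apexStep, cross, Prod.fst_add, Prod.snd_add, Prod.smul_fst, Prod.smul_snd,
      smul_eq_mul] <;> ring

lemma HasApexAt.mem_nearbyPositions (hg : g ∈ primitiveVectors j) (hx : HasApexAt g A C x)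
    (hA : A ∈ grid K) (hB : A + (2 ^ w : ℤ) • apexStep g x ∈ grid K) :
    j + w < K ∧ x ∈ nearbyPositions (K - j) := by
  rcases x with d | v
  · refine ⟨lt_of_mem_primitiveVectors hg hA hB, ?_⟩
    obtain ⟨hd, hd2, -⟩ := hx
    rw [nearbyPositions, Finset.inl_mem_disjSum]
    simp only [Finset.mem_insert, Finset.mem_singleton]
    grind
  · rw [apexStep, smul_smul, ← pow_add] at hB
    have := lt_of_mem_primitiveVectors hg hA hB
    rw [nearbyPositions, Finset.inr_mem_disjSum, Finset.mem_range]
    omega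

lemma IsThin.exists_mem_flags (hP : IsHortonClusterGrid K P) (hthin : IsThin A B C)
    (hs : IsStabbed K P q l l' l'' A B C) : ∃ g x w, (g, C, x, w) ∈ flags K q ∧
      IsCoprime g.1 g.2 ∧ HasApexAt g A C x ∧ B = A + (2 ^ w : ℤ) • apexStep g x := by
  have h0 := hP.orient_ne_zero_of_isThin hs.mem_fst hs.mem_snd hs.mem_apex hthin l l' l''
  obtain ⟨g, x, n, hg, hn, hx, rfl⟩ := hthin
  obtain ⟨σ, hσ⟩ := hP.exists_seesInOrder (ne_zero_of_isCoprime hg) hs.mem_apex hx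
  obtain ⟨w, hw⟩ := hσ.exists_sub_eq_two_pow hP (apexStep_ne_zero hg x) hn
    (by rwa [zero_smul, add_zero])
  obtain rfl : n = 2 ^ w := by rw [← hw, sub_zero]
  obtain ⟨j, hgj⟩ := exists_mem_primitiveVectors hg
  obtain ⟨hjw, hxj⟩ := hx.mem_nearbyPositions hgj hs.mem_fst hs.mem_snd
  have hmax : max |g.1| |g.2| < 2 ^ K :=
    (mem_primitiveVectors.1 hgj).1.trans_le (pow_le_pow_right₀ one_le_two (by omega))
  refine ⟨g, x, w, ?_, hg, hx, rfl⟩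
  simp only [flags, Finset.mem_biUnion, Finset.mem_product, Finset.mem_singleton,
    Finset.mem_range]
  exact ⟨j, by omega, g, hgj, rfl, hs.apex_mem_strip hP h0 hmax hx.abs_cross_sub_le
    (by rw [cross_add_smul_apexStep]; exact hx.abs_cross_sub_le), hxj, by omega⟩

/-- The first base vertices of the triangles with given flag and labels that contain `q`. -/
def stabbedBases (K : ℕ) {k : ℕ} (P : ℤ × ℤ → Fin (k + 1) → ℝ × ℝ) (q : ℝ × ℝ)
    (l l' l'' : Fin (k + 1)) : (ℤ × ℤ) × (ℤ × ℤ) × (ℤ ⊕ ℕ) × ℕ → Finset (ℤ × ℤ) :=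
  fun (g, C, x, w) => {A ∈ grid K |
    HasApexAt g A C x ∧ IsStabbed K P q l l' l'' A (A + (2 ^ w : ℤ) • apexStep g x) C}

lemma card_stabbedBases_le_two (hP : IsHortonClusterGrid K P) (hg : IsCoprime g.1 g.2)
    (hq : q ≠ P C l'') : (stabbedBases K P q l l' l'' (g, C, x, w)).card ≤ 2 := by
  refine card_stabbed_translates_le_two (w := w) (l := l) (l' := l') hP (apexStep_ne_zero hg x) hq
    (fun A hA => ?_) fun A hA B hB => ?_
  · obtain ⟨-, hx, hs⟩ := Finset.mem_filter.1 hA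
    exact ⟨hP.exists_seesInOrder (ne_zero_of_isCoprime hg) hs.mem_apex hx, hs⟩
  · exact (Finset.mem_filter.1 hA).2.1.exists_eq_add_smul hg (Finset.mem_filter.1 hB).2.1

lemma card_isThin_isStabbed_le (hP : IsHortonClusterGrid K P) (l l' l'' : Fin (k + 1))
    (q : ℝ × ℝ) : {z ∈ grid K ×ˢ grid K ×ˢ grid K | IsThin z.1 z.2.1 z.2.2 ∧
      IsStabbed K P q l l' l'' z.1 z.2.1 z.2.2 ∧ q ≠ P z.2.2 l''}.card ≤ 6720 * 4 ^ K := by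
  let F := {f ∈ flags K q | IsCoprime f.1.1 f.1.2 ∧ q ≠ P f.2.1 l''}
  have hcover : {z ∈ grid K ×ˢ grid K ×ˢ grid K | IsThin z.1 z.2.1 z.2.2 ∧
      IsStabbed K P q l l' l'' z.1 z.2.1 z.2.2 ∧ q ≠ P z.2.2 l''} ⊆
      F.biUnion fun f => (stabbedBases K P q l l' l'' f).image fun A =>
        (A, A + (2 ^ f.2.2.2 : ℤ) • apexStep f.1 f.2.2.1, f.2.1) := by
    rintro ⟨A, B, C⟩ hz
    obtain ⟨-, hthin, hs, hq⟩ := Finset.mem_filter.1 hz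
    dsimp only at hthin hs hq
    obtain ⟨g, x, w, hf, hg, hx, rfl⟩ := hthin.exists_mem_flags hP hs
    exact Finset.mem_biUnion.2 ⟨(g, C, x, w), Finset.mem_filter.2 ⟨hf, hg, hq⟩,
      Finset.mem_image.2 ⟨A, Finset.mem_filter.2 ⟨hs.mem_fst, hx, hs⟩, rfl⟩⟩
  calc _ ≤ F.card * 2 := by
        refine (Finset.card_le_card hcover).trans <|
          Finset.card_biUnion_le_card_mul _ _ _ fun f hf => Finset.card_image_le.trans ?_
        obtain ⟨-, hg, hq⟩ := Finset.mem_filter.1 hf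
        exact card_stabbedBases_le_two hP hg hq
    _ ≤ 3360 * 4 ^ K * 2 := by
        gcongr
        exact (Finset.card_filter_le _ _).trans (card_flags_le K q)
    _ = 6720 * 4 ^ K := by ring

end Counting

section EmptyTriangles

variable {K k : ℕ} {P : ℤ × ℤ → Fin (k + 1) → ℝ × ℝ} {A B C : ℤ × ℤ} {l l' l'' : Fin (k + 1)}
  {q : ℝ × ℝ} {S : Set (ℝ × ℝ)} {t : Finset (ℝ × ℝ)}

lemma card_grid (K : ℕ) : (grid K).card = 4 ^ K := by
  have h : ((2 : ℤ) ^ K - 0).toNat = 2 ^ K := by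
    rw [sub_zero, Int.toNat_pow_of_nonneg zero_le_two]
    rfl
  rw [grid, Finset.card_product, Int.card_Ico, h, ← mul_pow]
  rfl

lemma exists_mem_grid_ne (hK : K ≠ 0) (A : ℤ × ℤ) : ∃ B ∈ grid K, A ≠ B := by
  have h : 1 < (grid K).card := by
    rw [card_grid]
    exact Nat.one_lt_pow hK (by norm_num)
  exact (Finset.exists_mem_ne h A).imp fun _ hB => ⟨hB.1, hB.2.symm⟩

namespace IsHortonClusterGrid

lemma orient_ne_zero_of_cluster (hP : IsHortonClusterGrid K P) (hA : A ∈ grid K) (hB : B ∈ grid K)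
    (hAB : A ≠ B) (hl : l ≠ l') (l'' : Fin (k + 1)) : orient (P A l) (P A l') (P B l'') ≠ 0 :=
  right_ne_zero_of_mul (hP.cluster_direction hA hB hAB hl l'').ne'

lemma eq_of_apply_eq (hP : IsHortonClusterGrid K P) (hA : A ∈ grid K) (hB : B ∈ grid K)
    (h : P A l = P B l') : A = B := by
  have hround {a b : ℤ} {x : ℝ} (ha : |x - a| ≤ 1 / 2 ^ (K + 2)) (hb : |x - b| ≤ 1 / 2 ^ (K + 2)) :
      a = b := by
    have hK : (1 : ℝ) / 2 ^ (K + 2) ≤ 1 / 4 := by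
      rw [pow_add]
      gcongr
      linarith [one_le_pow₀ (n := K) (one_le_two (α := ℝ))]
    rw [← sub_eq_zero, ← Int.abs_lt_one_iff]
    have : |(a : ℝ) - b| < 1 := by
      linarith [_root_.abs_sub_le (a : ℝ) x b, abs_sub_comm (a : ℝ) x]
    exact_mod_cast this
  have hA' := hP.abs_sub_le hA l
  have hB' := hP.abs_sub_le hB l'
  rw [h] at hA'
  exact Prod.ext (hround hA'.1 hB'.1) (hround hA'.2 hB'.2)

lemma injOn_uncurry (hP : IsHortonClusterGrid K P) (hK : K ≠ 0) :
    Set.InjOn (Function.uncurry P) {X | X.1 ∈ grid K} := by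
  rintro ⟨A, l⟩ hA ⟨B, l'⟩ hB h
  obtain rfl : A = B := hP.eq_of_apply_eq hA hB h
  obtain ⟨B, hB, hAB⟩ := exists_mem_grid_ne hK A
  rw [Prod.mk_right_inj]
  by_contra hl
  refine hP.orient_ne_zero_of_cluster hA hB hAB hl 0 ?_
  rw [show P A l = P A l' from h, orient_self_self]

lemma orient_ne_zero (hP : IsHortonClusterGrid K P) (hA : A ∈ grid K) (hB : B ∈ grid K)
    (hC : C ∈ grid K) (hab : P A l ≠ P B l') (hac : P A l ≠ P C l'') (hbc : P B l' ≠ P C l'') :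
    orient (P A l) (P B l') (P C l'') ≠ 0 := by
  have ne_label {D : ℤ × ℤ} {m m' : Fin (k + 1)} (h : P D m ≠ P D m') : m ≠ m' :=
    fun e => h (e ▸ rfl)
  by_cases hAB : A = B
  · subst hAB
    by_cases hAC : A = C
    · subst hAC
      exact right_ne_zero_of_mul
        (hP.cluster_concave hA (ne_label hab) (ne_label hac) (ne_label hbc)).ne
    · exact hP.orient_ne_zero_of_cluster hA hC hAC (ne_label hab) l''
  by_cases hAC : A = C
  · subst hAC
    rw [← orient_rotate, ← orient_rotate]
    exact hP.orient_ne_zero_of_cluster hA hB hAB (ne_label hac.symm) l'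
  by_cases hBC : B = C
  · subst hBC
    rw [← orient_rotate]
    exact hP.orient_ne_zero_of_cluster hB hA (Ne.symm hAB) (ne_label hbc) l
  · obtain ⟨σ, hσ⟩ := hP.exists_orient_sign hA hB hC hAB hAC hBC
    exact right_ne_zero_of_mul (hσ l l' l'').ne'

end IsHortonClusterGrid

/-- `S` consists of the points of `P` with labels less than `k` and of some of the points with
label `k`. This leaves enough room for sets of any size between `4 ^ K * k` and
`4 ^ K * (k + 1)`. -/
structure IsClusterSet (K : ℕ) {k : ℕ} (P : ℤ × ℤ → Fin (k + 1) → ℝ × ℝ) (S : Set (ℝ × ℝ)) :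
    Prop where
  exists_eq : ∀ p ∈ S, ∃ A ∈ grid K, ∃ l, P A l = p
  apply_mem : ∀ A ∈ grid K, ∀ l < Fin.last k, P A l ∈ S

lemma IsHortonClusterGrid.exists_isClusterSet (hP : IsHortonClusterGrid K P) (hK : K ≠ 0) {n : ℕ}
    (hn : 4 ^ K * k ≤ n) (hn' : n ≤ 4 ^ K * (k + 1)) :
    ∃ S : Finset (ℝ × ℝ), S.card = n ∧ IsClusterSet K P S := by
  obtain ⟨T, hT, hT', hcard⟩ := Finset.exists_subsuperset_card_eq (n := n)
    (Finset.product_subset_product_right (s := grid K)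
      (Finset.subset_univ (Finset.Iio (Fin.last k))))
    (by rwa [Finset.card_product, card_grid, Fin.card_Iio, Fin.val_last])
    (by rwa [Finset.card_product, card_grid, Finset.card_univ, Fintype.card_fin])
  have hTgrid (X) (hX : X ∈ T) : X.1 ∈ grid K := (Finset.mem_product.1 (hT' hX)).1
  refine ⟨T.image (Function.uncurry P), ?_, ?_, ?_⟩
  · rw [Finset.card_image_of_injOn ((hP.injOn_uncurry hK).mono hTgrid), hcard]
  · intro p hp
    obtain ⟨X, hX, rfl⟩ := Finset.mem_image.1 (Finset.mem_coe.1 hp)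
    exact ⟨X.1, hTgrid X hX, X.2, rfl⟩
  · intro A hA l hl
    exact Finset.mem_coe.2 <| Finset.mem_image_of_mem (Function.uncurry P) <|
      hT (Finset.mk_mem_product hA (Finset.mem_Iio.2 hl))

lemma IsClusterSet.generalPosition (hP : IsHortonClusterGrid K P) (hS : IsClusterSet K P S) :
    GeneralPosition S := by
  intro a ha b hb c hc hab hac hbc hcol
  obtain ⟨A, hA, l, rfl⟩ := hS.exists_eq a ha
  obtain ⟨B, hB, l', rfl⟩ := hS.exists_eq b hb
  obtain ⟨C, hC, l'', rfl⟩ := hS.exists_eq c hc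
  exact hP.orient_ne_zero hA hB hC hab hac hbc (orient_eq_zero_of_collinear hcol)

lemma IsStabbed.upToPerm_eq_or_isThin (hP : IsHortonClusterGrid K P)
    (hs : IsStabbed K P q l l' l'' A B C) : UpToPerm (fun A B C => A = B ∨ IsThin A B C) A B C := by
  by_cases hAB : A = B
  · exact .of (.inl hAB)
  by_cases hAC : A = C
  · exact .rotate (.of (.inl hAC.symm))
  by_cases hBC : B = C
  · exact .rotate (.rotate (.of (.inl hBC)))
  · exact (hs.upToPerm_isThin hP hAB hAC hBC).map id fun _ _ _ h => .of (.inr h)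

lemma IsEmptyTriangleOf.exists_isStabbed (hP : IsHortonClusterGrid K P) (hk : k ≠ 0)
    (hS : IsClusterSet K P S) (ht : IsEmptyTriangleOf S t)
    (hq : q ∈ convexHull ℝ (t : Set (ℝ × ℝ))) :
    ∃ A B C, (∃ l l' l'', t = {P A l, P B l', P C l''} ∧ orient (P A l) (P B l') (P C l'') ≠ 0 ∧
      IsStabbed K P q l l' l'' A B C) ∧ (A = B ∨ IsThin A B C) := by
  obtain ⟨hcard, hsub, -, hempty⟩ := ht
  obtain ⟨a, b, c, hab, hac, hbc, rfl⟩ := Finset.card_eq_three.1 hcard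
  simp only [Finset.coe_insert, Finset.coe_singleton] at hsub hempty hq
  obtain ⟨A, hA, l, rfl⟩ := hS.exists_eq a (hsub (by simp))
  obtain ⟨B, hB, l', rfl⟩ := hS.exists_eq b (hsub (by simp))
  obtain ⟨C, hC, l'', rfl⟩ := hS.exists_eq c (hsub (by simp))
  have h0 := hP.orient_ne_zero hA hB hC hab hac hbc
  have hs : IsStabbed K P q l l' l'' A B C := by
    refine ⟨hA, hB, hC, fun U hU hin => ?_, (mem_convexHull_triangle h0).1 hq⟩
    exact hempty _ (hS.apply_mem U hU 0 (Fin.lt_def.2 (Nat.pos_of_ne_zero hk)))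
      ((mem_interior_convexHull_triangle h0).2 hin)
  refine (hs.upToPerm_eq_or_isThin hP).exists_of_invariant ?_ ?_ ⟨l, l', l'', rfl, h0, hs⟩
  · rintro A B C ⟨l, l', l'', ht, h0, hs⟩
    refine ⟨l', l'', l, ht.trans ?_, by rwa [orient_rotate], hs.rotate⟩
    rw [Finset.insert_comm, Finset.pair_comm (P A l)]
  · rintro A B C ⟨l, l', l'', ht, h0, hs⟩
    exact ⟨l', l, l'', ht.trans (Finset.insert_comm _ _ _), by rwa [orient_swap, neg_ne_zero],
      hs.swap⟩

/-- The grid triples carrying the nondegenerate triangles with labels `l`, `l'`, `l''` that contain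
`q`, not as their apex, and whose base lies in one cluster or which are thin. -/
def stabbedTriples (K : ℕ) {k : ℕ} (P : ℤ × ℤ → Fin (k + 1) → ℝ × ℝ) (q : ℝ × ℝ)
    (l l' l'' : Fin (k + 1)) : Finset ((ℤ × ℤ) × (ℤ × ℤ) × (ℤ × ℤ)) :=
  {z ∈ grid K ×ˢ grid K ×ˢ grid K | (z.1 = z.2.1 ∨ IsThin z.1 z.2.1 z.2.2) ∧
    orient (P z.1 l) (P z.2.1 l') (P z.2.2 l'') ≠ 0 ∧
    IsStabbed K P q l l' l'' z.1 z.2.1 z.2.2 ∧ q ≠ P z.2.2 l''}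

lemma card_clusterBase_isStabbed_le (hP : IsHortonClusterGrid K P) (l l' l'' : Fin (k + 1))
    (q : ℝ × ℝ) : {z ∈ grid K ×ˢ grid K | z.1 ≠ z.2 ∧
      orient (P z.1 l) (P z.1 l') (P z.2 l'') ≠ 0 ∧
      WeaklyInside (P z.1 l) (P z.1 l') (P z.2 l'') q ∧ q ≠ P z.2 l''}.card ≤ 4 ^ K := by
  rw [← card_grid]
  refine Finset.card_le_card_of_injOn Prod.snd (fun z hz => ?_) ?_
  · exact (Finset.mem_product.1 (Finset.mem_filter.1 hz).1).2
  rintro ⟨A, C⟩ hA ⟨A', C'⟩ hA' (rfl : C = C')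
  obtain ⟨hAC, hne, h0, hin, hq⟩ := Finset.mem_filter.1 hA
  obtain ⟨hAC', hne', h0', hin', -⟩ := Finset.mem_filter.1 hA'
  by_contra h
  have hAA' : A ≠ A' := fun e => h (e ▸ rfl)
  rw [Finset.mem_product] at hAC hAC'
  obtain ⟨σ, hσ⟩ := hP.exists_orient_sign hAC.1 hAC'.1 hAC.2 hAA' hne hne'
  exact hq (eq_apex_of_weaklyInside_of_separated h0 h0' hin hin' (hσ l l l'') (hσ l l' l'')
    (hσ l' l l'') (hσ l' l' l''))

lemma card_stabbedTriples_le (hP : IsHortonClusterGrid K P) (l l' l'' : Fin (k + 1))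
    (q : ℝ × ℝ) : (stabbedTriples K P q l l' l'').card ≤ 6722 * 4 ^ K := by
  have hcover : stabbedTriples K P q l l' l'' ⊆
      ((grid K).image fun A => (A, A, A)) ∪
      {z ∈ grid K ×ˢ grid K | z.1 ≠ z.2 ∧ orient (P z.1 l) (P z.1 l') (P z.2 l'') ≠ 0 ∧
        WeaklyInside (P z.1 l) (P z.1 l') (P z.2 l'') q ∧ q ≠ P z.2 l''}.image
          (fun z => (z.1, z.1, z.2)) ∪
      {z ∈ grid K ×ˢ grid K ×ˢ grid K | IsThin z.1 z.2.1 z.2.2 ∧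
        IsStabbed K P q l l' l'' z.1 z.2.1 z.2.2 ∧ q ≠ P z.2.2 l''} := by
    rintro ⟨A, B, C⟩ hz
    obtain ⟨hgrid, hthin, h0, hs, hq⟩ := Finset.mem_filter.1 hz
    dsimp only at hthin h0 hs hq
    rcases hthin with rfl | hthin
    · refine Finset.mem_union_left _ (Finset.mem_union.2 ?_)
      by_cases hAC : A = C
      · exact .inl (Finset.mem_image.2 ⟨A, hs.mem_fst, by rw [hAC]⟩)
      · exact .inr (Finset.mem_image.2 ⟨(A, C), Finset.mem_filter.2
          ⟨Finset.mk_mem_product hs.mem_fst hs.mem_apex, hAC, h0, hs.weaklyInside, hq⟩, rfl⟩)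
    · exact Finset.mem_union_right _ (Finset.mem_filter.2 ⟨hgrid, hthin, hs, hq⟩)
  calc _ ≤ (grid K).card + 4 ^ K + 6720 * 4 ^ K :=
        (Finset.card_le_card hcover).trans <| (Finset.card_union_le _ _).trans <| add_le_add
          ((Finset.card_union_le _ _).trans <| add_le_add Finset.card_image_le <|
            Finset.card_image_le.trans <| card_clusterBase_isStabbed_le hP l l' l'' q)
          (card_isThin_isStabbed_le hP l l' l'' q)
    _ = 6722 * 4 ^ K := by rw [card_grid]; ring

lemma ncard_le_card_mul {ι α β : Type*} [Fintype ι] {T : Set α} {F : ι → Finset β}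
    {f : ι → β → α} {N : ℕ} (hF : ∀ i, (F i).card ≤ N) (hT : ∀ t ∈ T, ∃ i, ∃ z ∈ F i, f i z = t) :
    T.ncard ≤ Fintype.card ι * N := by
  have hcover : T ⊆ ↑(Finset.univ.biUnion fun i => (F i).image (f i)) := fun t ht => by
    obtain ⟨i, hi⟩ := hT t ht
    exact Finset.mem_coe.2 (Finset.mem_biUnion.2 ⟨i, Finset.mem_univ i, Finset.mem_image.2 hi⟩)
  calc T.ncard ≤ (Finset.univ.biUnion fun i => (F i).image (f i)).card := by
        rw [← Set.ncard_coe_finset]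
        exact Set.ncard_le_ncard hcover (Finset.finite_toSet _)
    _ ≤ Fintype.card ι * N :=
        Finset.card_biUnion_le_card_mul _ _ _ fun i _ => Finset.card_image_le.trans (hF i)

lemma card_labels (k : ℕ) :
    Fintype.card (Fin (k + 1) × Fin (k + 1) × Fin (k + 1)) = (k + 1) ^ 3 := by
  simp only [Fintype.card_prod, Fintype.card_fin]
  ring

namespace IsClusterSet

lemma stabbedCount_le (hP : IsHortonClusterGrid K P) (hk : k ≠ 0) (hS : IsClusterSet K P S)
    (q : ℝ × ℝ) : stabbedCount S q ≤ (k + 1) ^ 3 * (6722 * 4 ^ K) := by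
  rw [← card_labels]
  refine ncard_le_card_mul (F := fun i => stabbedTriples K P q i.1 i.2.1 i.2.2)
    (f := fun i z => {P z.1 i.1, P z.2.1 i.2.1, P z.2.2 i.2.2})
    (fun i => card_stabbedTriples_le hP _ _ _ q) ?_
  rintro t ⟨ht, hq⟩
  obtain ⟨A, B, C, ⟨l, l', l'', rfl, h0, hs⟩, hthin⟩ :=
    ht.exists_isStabbed hP hk hS (interior_subset hq)
  refine ⟨(l, l', l''), (A, B, C), Finset.mem_filter.2 ⟨?_, hthin, h0, hs, ?_⟩, rfl⟩
  · exact Finset.mk_mem_product hs.mem_fst (Finset.mk_mem_product hs.mem_snd hs.mem_apex)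
  · rintro rfl
    simp only [Finset.coe_insert, Finset.coe_singleton] at hq
    have hin := ((mem_interior_convexHull_triangle h0).1 hq).2.1
    simp only [orient_self_right, mul_zero, lt_irrefl] at hin

lemma tau_le (hP : IsHortonClusterGrid K P) (hk : k ≠ 0) (hS : IsClusterSet K P S) :
    tau S ≤ (k + 1) ^ 3 * (4 ^ K * (6722 * 4 ^ K)) := by
  rw [← card_labels, ← card_grid]
  refine ncard_le_card_mul
    (F := fun i => (grid K).biUnion fun X => stabbedTriples K P (P X i.1) i.1 i.2.1 i.2.2)
    (f := fun i z => {P z.1 i.1, P z.2.1 i.2.1, P z.2.2 i.2.2})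
    (fun i => Finset.card_biUnion_le_card_mul _ _ _ fun X _ => ?_) fun t ht => ?_
  · rw [card_grid]
    exact card_stabbedTriples_le hP _ _ _ _
  have hne : (t : Set (ℝ × ℝ)).Nonempty :=
    Finset.coe_nonempty.2 (Finset.card_pos.1 (ht.1 ▸ three_pos))
  obtain ⟨q, hq⟩ := hne.convexHull (𝕜 := ℝ)
  obtain ⟨A, B, C, ⟨l, l', l'', rfl, h0, hs⟩, hthin⟩ := ht.exists_isStabbed hP hk hS hq
  refine ⟨(l, l', l''), (A, B, C), Finset.mem_biUnion.2
    ⟨A, hs.mem_fst, Finset.mem_filter.2 ⟨?_, hthin, h0, ?_, fun h => h0 ?_⟩⟩, rfl⟩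
  · exact Finset.mk_mem_product hs.mem_fst (Finset.mk_mem_product hs.mem_snd hs.mem_apex)
  · exact { hs with weaklyInside := weaklyInside_vertex _ _ _ }
  · dsimp only at h
    rw [h, orient_self_left]

end IsClusterSet

end EmptyTriangles

section LowerBound

variable {K k : ℕ} {P : ℤ × ℤ → Fin (k + 1) → ℝ × ℝ} {A B U : ℤ × ℤ} {l l' m : Fin (k + 1)}
  {S : Set (ℝ × ℝ)}

lemma card_eq_three_of_orient_ne_zero {a b c : ℝ × ℝ} (h : orient a b c ≠ 0) :
    ({a, b, c} : Finset (ℝ × ℝ)).card = 3 := by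
  refine Finset.card_eq_three.2 ⟨a, b, c, ?_, ?_, ?_, rfl⟩ <;> rintro rfl
  · exact h (orient_self_self _ _)
  · exact h (orient_self_left _ _)
  · exact h (orient_self_right _ _)

namespace IsHortonClusterGrid

lemma orient_cluster_neg_iff (hP : IsHortonClusterGrid K P) (hA : A ∈ grid K) (hB : B ∈ grid K)
    (hAB : A ≠ B) : orient (P A l) (P A l') (P B m) < 0 ↔
      (((l' : ℕ) : ℝ) - (l : ℕ)) * ((2 ^ K * (B.2 - A.2) - (B.1 - A.1) : ℤ) : ℝ) < 0 := by
  rcases eq_or_ne l l' with rfl | hl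
  · rw [orient_self_self, sub_self, zero_mul]
  · exact (neg_iff_neg_of_mul_pos (hP.cluster_direction hA hB hAB hl m)).symm

lemma orient_cluster_neg_iff_lt (hP : IsHortonClusterGrid K P) (hA : A ∈ grid K) (hB : B ∈ grid K)
    (hAB : 2 ^ K * (B.2 - A.2) - (B.1 - A.1) < 0) :
    orient (P A l) (P A l') (P B m) < 0 ↔ l < l' := by
  have hne : A ≠ B := by
    rintro rfl
    simp only [sub_self, mul_zero, lt_irrefl] at hAB
  rw [hP.orient_cluster_neg_iff hA hB hne, ← zero_mul, mul_lt_mul_right_of_neg, sub_pos,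
    Nat.cast_lt, Fin.val_fin_lt]
  exact_mod_cast hAB

lemma orient_cluster_neg_iff_gt (hP : IsHortonClusterGrid K P) (hA : A ∈ grid K) (hB : B ∈ grid K)
    (hAB : 0 < 2 ^ K * (B.2 - A.2) - (B.1 - A.1)) :
    orient (P A l) (P A l') (P B m) < 0 ↔ l' < l := by
  have hne : A ≠ B := by
    rintro rfl
    simp only [sub_self, mul_zero, lt_irrefl] at hAB
  rw [hP.orient_cluster_neg_iff hA hB hne, ← zero_mul, mul_lt_mul_iff_left₀, sub_neg,
    Nat.cast_lt, Fin.val_fin_lt]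
  exact_mod_cast hAB

lemma orient_cluster_neg (hP : IsHortonClusterGrid K P) (hA : A ∈ grid K) (hl : l < m)
    (hl' : m < l') : orient (P A l) (P A m) (P A l') < 0 := by
  have h := hP.cluster_concave hA hl.ne (hl.trans hl').ne hl'.ne
  have hlt {i j : Fin (k + 1)} (hij : i < j) : (0 : ℝ) < (j : ℕ) - (i : ℕ) :=
    sub_pos.2 (Nat.cast_lt.2 hij)
  exact neg_of_mul_neg_right h
    (mul_pos (mul_pos (hlt hl) (hlt (hl.trans hl'))) (hlt hl')).le

lemma not_strictlyInside_clusterBase (hP : IsHortonClusterGrid K P) (hA : A ∈ grid K)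
    (hB : B ∈ grid K) (hU : U ∈ grid K) (hAB : 2 ^ K * (B.2 - A.2) - (B.1 - A.1) < 0)
    (hl : l < l') (l'' m : Fin (k + 1)) :
    ¬ StrictlyInside (P A l) (P A l') (P B l'') (P U m) := by
  rintro ⟨hbase, hright, hleft⟩
  have h := (hP.orient_cluster_neg_iff_lt hA hB hAB (m := l'')).2 hl
  replace hbase := neg_of_mul_pos_right hbase h.le
  replace hright := neg_of_mul_pos_right hright h.le
  replace hleft := neg_of_mul_pos_right hleft h.le
  have hBA : 0 < 2 ^ K * (A.2 - B.2) - (A.1 - B.1) := by linarith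
  by_cases hUA : U = A
  · subst hUA
    rw [orient_rotate (P U m), hP.orient_cluster_neg_iff_lt hU hB hAB] at hright
    rw [← orient_rotate, hP.orient_cluster_neg_iff_lt hU hB hAB] at hleft
    have hconcave := hP.orient_cluster_neg hU hleft hright
    rw [orient_swap_right] at hconcave
    linarith
  by_cases hUB : U = B
  · subst hUB
    rw [← orient_rotate, hP.orient_cluster_neg_iff_gt hU hA hBA] at hright
    rw [orient_rotate (P U m), hP.orient_cluster_neg_iff_gt hU hA hBA] at hleft
    exact lt_asymm hright hleft
  · have hne : A ≠ B := by
      rintro rfl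
      exact lt_asymm hAB hBA
    obtain ⟨σ, hσ⟩ := hP.exists_orient_sign hA hB hU hne (Ne.symm hUA) (Ne.symm hUB)
    rw [orient_swap] at hleft
    have hsame := mul_pos_trans (mul_comm σ _ ▸ hσ l l'' m) (hσ l' l'' m)
    nlinarith

lemma isEmptyTriangleOf_clusterBase (hP : IsHortonClusterGrid K P) (hS : IsClusterSet K P S)
    (hA : A ∈ grid K) (hB : B ∈ grid K) (hAB : 2 ^ K * (B.2 - A.2) - (B.1 - A.1) < 0)
    (hl : l < l') (hl' : l' < Fin.last k) (hm : m < Fin.last k) :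
    IsEmptyTriangleOf S {P A l, P A l', P B m} := by
  have h0 := ((hP.orient_cluster_neg_iff_lt hA hB hAB (m := m)).2 hl).ne
  refine ⟨card_eq_three_of_orient_ne_zero h0, ?_⟩
  simp only [Finset.coe_insert, Finset.coe_singleton]
  refine ⟨?_, fun hcol => h0 (orient_eq_zero_of_collinear hcol), fun p hp hin => ?_⟩
  · rintro p (rfl | rfl | rfl)
    exacts [hS.apply_mem A hA l (hl.trans hl'), hS.apply_mem A hA l' hl', hS.apply_mem B hB m hm]
  · obtain ⟨U, hU, i, rfl⟩ := hS.exists_eq p hp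
    exact hP.not_strictlyInside_clusterBase hA hB hU hAB hl m i
      ((mem_interior_convexHull_triangle h0).1 hin)

lemma apply_eq_iff (hP : IsHortonClusterGrid K P) (hK : K ≠ 0) (hA : A ∈ grid K)
    (hB : B ∈ grid K) : P A l = P B l' ↔ A = B ∧ l = l' := by
  rw [← Prod.mk.injEq]
  exact (hP.injOn_uncurry hK).eq_iff (x := (A, l)) (y := (B, l')) hA hB

end IsHortonClusterGrid

/-- Indices `(A, B, l, l', l'')` of triangles with vertices `P A l`, `P A l'`, `P B l''` where `A`
is in the upper and `B` in the lower half of the grid of side `2 ^ (K + 1)`. Taking `l` from the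
lower and `l'` from the upper half of the labels makes the index of a triangle unique. -/
def clusterBaseIndices (K k : ℕ) :
    Finset ((ℤ × ℤ) × (ℤ × ℤ) × Fin (k + 1) × Fin (k + 1) × Fin (k + 1)) :=
  (Finset.Ico 0 (2 ^ (K + 1)) ×ˢ Finset.Ico (2 ^ K) (2 ^ (K + 1))) ×ˢ
    (Finset.Ico 0 (2 ^ (K + 1)) ×ˢ Finset.Ico 0 (2 ^ K)) ×ˢ
      Finset.Iio ⟨k / 2, by omega⟩ ×ˢ Finset.Ico ⟨k / 2, by omega⟩ (Fin.last k) ×ˢ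
        Finset.Iio (Fin.last k)

lemma card_clusterBaseIndices (K k : ℕ) : (clusterBaseIndices K k).card =
    4 ^ (K + 1) * 4 ^ K * ((k / 2) * (k - k / 2) * k) := by
  have hpow (j : ℕ) : ((2 : ℤ) ^ j).toNat = 2 ^ j := by
    rw [Int.toNat_pow_of_nonneg zero_le_two]
    rfl
  have hhalf : (2 : ℤ) ^ (K + 1) - 2 ^ K = 2 ^ K := by ring
  simp only [clusterBaseIndices, Finset.card_product, Int.card_Ico, sub_zero, hhalf, hpow,
    Fin.card_Iio, Fin.card_Ico, Fin.val_last, show 4 = 2 * 2 from rfl, mul_pow]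
  ring

lemma of_mem_clusterBaseIndices {l'' : Fin (k + 1)}
    (h : (A, B, l, l', l'') ∈ clusterBaseIndices K k) :
    A ∈ grid (K + 1) ∧ B ∈ grid (K + 1) ∧ (2 ^ K ≤ A.2 ∧ B.2 < 2 ^ K) ∧
      ((l : ℕ) < k / 2 ∧ k / 2 ≤ (l' : ℕ)) ∧ l' < Fin.last k ∧ l'' < Fin.last k := by
  have : (2 : ℤ) ^ K < 2 ^ (K + 1) := pow_lt_pow_right₀ one_lt_two K.lt_succ_self
  have : (0 : ℤ) < 2 ^ K := pow_pos two_pos K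
  simp only [clusterBaseIndices, Finset.mem_product, Finset.mem_Ico, Finset.mem_Iio,
    Fin.lt_def, Fin.le_def] at h
  simp only [mem_grid, Finset.mem_Ico, Fin.lt_def]
  omega

namespace IsHortonClusterGrid

lemma injOn_clusterBase (hP : IsHortonClusterGrid (K + 1) P) :
    Set.InjOn (fun X : (ℤ × ℤ) × (ℤ × ℤ) × Fin (k + 1) × Fin (k + 1) × Fin (k + 1) =>
      ({P X.1 X.2.2.1, P X.1 X.2.2.2.1, P X.2.1 X.2.2.2.2} : Finset (ℝ × ℝ)))
      (clusterBaseIndices K k) := by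
  rintro ⟨A, B, a, a', b⟩ hX ⟨C, D, c, c', d⟩ hY hXY
  obtain ⟨hA, hB, hAB, ha, -⟩ := of_mem_clusterBaseIndices (Finset.mem_coe.1 hX)
  obtain ⟨hC, hD, hCD, hc, -⟩ := of_mem_clusterBaseIndices (Finset.mem_coe.1 hY)
  have hK := K.succ_ne_zero
  have hAD : A ≠ D := by
    rintro rfl
    exact hCD.2.not_ge hAB.1
  have hBC : B ≠ C := by
    rintro rfl
    exact hAB.2.not_ge hCD.1
  have hac' : a ≠ c' := by
    rintro rfl
    exact ha.1.not_ge hc.2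
  have ha'c : a' ≠ c := by
    rintro rfl
    exact hc.1.not_ge ha.2
  have hmem (p : ℝ × ℝ) := Finset.ext_iff.1 hXY p
  have h1 := (hmem (P A a)).1 (by simp)
  have h2 := (hmem (P A a')).1 (by simp)
  have h3 := (hmem (P B b)).1 (by simp)
  simp only [Finset.mem_insert, Finset.mem_singleton, hP.apply_eq_iff hK hA hC,
    hP.apply_eq_iff hK hA hD, hP.apply_eq_iff hK hB hC, hP.apply_eq_iff hK hB hD, hAD, hBC, hac',
    ha'c, false_and, and_false, or_false, false_or] at h1 h2 h3
  simp only [Prod.mk.injEq]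
  exact ⟨h1.1, h3.1, h1.2, h2.2, h3.2⟩

end IsHortonClusterGrid

lemma IsEmptyTriangleOf.finite_setOf {S : Finset (ℝ × ℝ)} :
    {t : Finset (ℝ × ℝ) | IsEmptyTriangleOf ↑S t}.Finite :=
  S.powerset.finite_toSet.subset fun _ ht => Finset.mem_powerset.2 (Finset.coe_subset.1 ht.2.1)

lemma IsClusterSet.card_clusterBaseIndices_le_tau {S : Finset (ℝ × ℝ)}
    (hP : IsHortonClusterGrid (K + 1) P) (hS : IsClusterSet (K + 1) P ↑S) :
    (clusterBaseIndices K k).card ≤ tau ↑S := by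
  rw [← Set.ncard_coe_finset, ← hP.injOn_clusterBase.ncard_image]
  refine Set.ncard_le_ncard ?_ IsEmptyTriangleOf.finite_setOf
  rintro _ ⟨⟨A, B, l, l', l''⟩, hX, rfl⟩
  obtain ⟨hA, hB, hAB, hl, hl', hl''⟩ := of_mem_clusterBaseIndices (Finset.mem_coe.1 hX)
  refine hP.isEmptyTriangleOf_clusterBase hS hA hB ?_ (Fin.lt_def.2 (hl.1.trans_le hl.2)) hl' hl''
  have hBA : B.2 - A.2 ≤ -1 := by omega
  have hwidth : -(2 : ℤ) ^ (K + 1) < B.1 - A.1 := by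
    linarith [(Finset.mem_Ico.1 (mem_grid.1 hA).1).2, (Finset.mem_Ico.1 (mem_grid.1 hB).1).1]
  linarith [mul_le_mul_of_nonneg_left hBA (pow_nonneg zero_le_two (K + 1) : (0 : ℤ) ≤ _)]

lemma IsClusterSet.le_tau {S : Finset (ℝ × ℝ)} (hP : IsHortonClusterGrid (K + 1) P)
    (hS : IsClusterSet (K + 1) P ↑S) (hk : 2 ≤ k) :
    4 ^ (K + 1) * 4 ^ (K + 1) * k ^ 3 ≤ 32 * tau ↑S := by
  have hhalf : k ^ 2 ≤ 8 * (k / 2 * (k - k / 2)) := by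
    have h₁ : k ≤ 4 * (k / 2) := by omega
    have h₂ : k ≤ 2 * (k - k / 2) := by omega
    calc k ^ 2 = k * k := sq k
      _ ≤ 4 * (k / 2) * (2 * (k - k / 2)) := Nat.mul_le_mul h₁ h₂
      _ = 8 * (k / 2 * (k - k / 2)) := by ring
  calc 4 ^ (K + 1) * 4 ^ (K + 1) * k ^ 3 = 4 ^ (K + 1) * 4 ^ (K + 1) * k * k ^ 2 := by ring
    _ ≤ 4 ^ (K + 1) * 4 ^ (K + 1) * k * (8 * (k / 2 * (k - k / 2))) := Nat.mul_le_mul_left _ hhalf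
    _ = 32 * (clusterBaseIndices K k).card := by
      rw [card_clusterBaseIndices]
      ring
    _ ≤ 32 * tau ↑S := Nat.mul_le_mul_left _ (hS.card_clusterBaseIndices_le_tau hP)

end LowerBound

section Scale

variable {n : ℕ} {x : ℝ}

lemma exists_finset_tau_stabbedCount_le_of_four_pow_le {K : ℕ} (hn : 2 * 4 ^ (K + 1) ≤ n) :
    ∃ S : Finset (ℝ × ℝ), S.card = n ∧ GeneralPosition ↑S ∧
      n ^ 3 ≤ 256 * (4 ^ (K + 1) * tau ↑S) ∧ 4 ^ (K + 1) * tau ↑S ≤ 53776 * n ^ 3 ∧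
      ∀ q : ℝ × ℝ, (4 ^ (K + 1)) ^ 2 * stabbedCount ↑S q ≤ 53776 * n ^ 3 := by
  have hm : 0 < 4 ^ (K + 1) := Nat.pow_pos four_pos
  obtain ⟨k, hk⟩ : ∃ k, k = n / 4 ^ (K + 1) := ⟨_, rfl⟩
  have hk2 : 2 ≤ k := hk ▸ (Nat.le_div_iff_mul_le hm).2 hn
  have hkn : 4 ^ (K + 1) * k ≤ n := hk ▸ Nat.mul_div_le n _
  have hnk : n ≤ 4 ^ (K + 1) * (k + 1) := hk ▸ (Nat.lt_mul_div_succ n hm).le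
  have hk1 : k + 1 ≤ 2 * k := by omega
  have hk0 : k ≠ 0 := by omega
  obtain ⟨P, hP⟩ := exists_isHortonClusterGrid (K + 1) k
  obtain ⟨S, hS, hPS⟩ := hP.exists_isClusterSet K.succ_ne_zero hkn hnk
  refine ⟨S, hS, hPS.generalPosition hP, ?_, ?_, fun q => ?_⟩
  · calc n ^ 3 ≤ (4 ^ (K + 1) * (2 * k)) ^ 3 := by gcongr; exact hnk.trans (by gcongr)
      _ = 8 * (4 ^ (K + 1) * (4 ^ (K + 1) * 4 ^ (K + 1) * k ^ 3)) := by ring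
      _ ≤ 8 * (4 ^ (K + 1) * (32 * tau ↑S)) :=
        Nat.mul_le_mul_left _ (Nat.mul_le_mul_left _ (hPS.le_tau hP hk2))
      _ = 256 * (4 ^ (K + 1) * tau ↑S) := by ring
  · calc 4 ^ (K + 1) * tau ↑S
        ≤ 4 ^ (K + 1) * ((2 * k) ^ 3 * (4 ^ (K + 1) * (6722 * 4 ^ (K + 1)))) := by
          gcongr; exact (hPS.tau_le hP hk0).trans (by gcongr)
      _ = 53776 * (4 ^ (K + 1) * k) ^ 3 := by ring
      _ ≤ 53776 * n ^ 3 := by gcongr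
  · calc (4 ^ (K + 1)) ^ 2 * stabbedCount ↑S q
        ≤ (4 ^ (K + 1)) ^ 2 * ((2 * k) ^ 3 * (6722 * 4 ^ (K + 1))) := by
          gcongr; exact (hPS.stabbedCount_le hP hk0 q).trans (by gcongr)
      _ = 53776 * (4 ^ (K + 1) * k) ^ 3 := by ring
      _ ≤ 53776 * n ^ 3 := by gcongr

lemma exists_four_pow_of_scale (hn : 8 ≤ n) (hx : 1 ≤ x) (hxn : x ≤ n) :
    ∃ K : ℕ, 2 * 4 ^ (K + 1) ≤ n ∧ (4 : ℝ) ^ (K + 1) ≤ 4 * x ∧ x ≤ 16 * 4 ^ (K + 1) := by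
  obtain ⟨e, hle, hlt⟩ := exists_nat_pow_near hx (by norm_num : (1 : ℝ) < 4)
  rcases Nat.lt_or_ge e 2 with he | he
  · have : (4 : ℝ) ^ (e + 1) ≤ 4 ^ 2 := pow_le_pow_right₀ (by norm_num) (by omega)
    exact ⟨0, hn, by rw [zero_add, pow_one]; linarith, by rw [zero_add, pow_one]; linarith⟩
  · obtain ⟨K, rfl⟩ := Nat.exists_eq_add_of_le' he
    rw [pow_succ] at hle
    rw [pow_succ, pow_succ] at hlt
    have hpos : (0 : ℝ) < 4 ^ (K + 1) := by positivity
    refine ⟨K, ?_, by linarith, by linarith⟩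
    exact_mod_cast (by linarith : (2 : ℝ) * 4 ^ (K + 1) ≤ n)

lemma exists_finset_tau_stabbedCount_le_of_scale (hn : 8 ≤ n) (hx : 1 ≤ x) (hxn : x ≤ n) :
    ∃ S : Finset (ℝ × ℝ), S.card = n ∧ GeneralPosition ↑S ∧
      1 / 1024 * (n ^ 3 / x) ≤ tau ↑S ∧ tau ↑S ≤ 860416 * (n ^ 3 / x) ∧
      ∀ q : ℝ × ℝ, (stabbedCount ↑S q : ℝ) ≤ 13766656 * (n ^ 3 / x ^ 2) := by
  obtain ⟨K, hKn, hKx, hxK⟩ := exists_four_pow_of_scale hn hx hxn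
  obtain ⟨S, hS, hgp, hlower, hupper, hstab⟩ :=
    exists_finset_tau_stabbedCount_le_of_four_pow_le hKn
  have hx0 : 0 < x := one_pos.trans_le hx
  refine ⟨S, hS, hgp, ?_, ?_, fun q => ?_⟩
  · rw [← mul_div_assoc, div_le_iff₀ hx0]
    have hreal : (n : ℝ) ^ 3 ≤ 256 * (4 ^ (K + 1) * tau ↑S) := by exact_mod_cast hlower
    linarith [mul_le_mul_of_nonneg_right hKx (tau ↑S).cast_nonneg]
  · rw [← mul_div_assoc, le_div_iff₀ hx0]
    have hreal : (4 : ℝ) ^ (K + 1) * tau ↑S ≤ 53776 * n ^ 3 := by exact_mod_cast hupper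
    linarith [mul_le_mul_of_nonneg_right hxK (tau ↑S).cast_nonneg]
  · rw [← mul_div_assoc, le_div_iff₀ (pow_pos hx0 2)]
    have hreal : ((4 : ℝ) ^ (K + 1)) ^ 2 * stabbedCount ↑S q ≤ 53776 * n ^ 3 := by
      exact_mod_cast hstab q
    have hsq := pow_le_pow_left₀ hx0.le hxK 2
    linarith [mul_le_mul_of_nonneg_right hsq (stabbedCount ↑S q).cast_nonneg]

end Scale

/-- **No Selection Lemma for empty triangles.** For every `0 ≤ α ≤ 1` there are constants
`c₁, c₂, C > 0` such that every sufficiently large `n` admits a set `S` of `n` points in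
general position with `c₁ n^(3-α) ≤ τ(S) ≤ c₂ n^(3-α)` in which every point of the plane
stabs at most `C n^(3-2α)` empty triangles. -/
theorem no_selection_lemma_for_empty_triangles (α : ℝ) (hα0 : 0 ≤ α) (hα1 : α ≤ 1) :
    ∃ c₁ c₂ C : ℝ, 0 < c₁ ∧ 0 < c₂ ∧ 0 < C ∧ ∃ N : ℕ, ∀ n : ℕ, N ≤ n →
      ∃ S : Finset (ℝ × ℝ), S.card = n ∧ GeneralPosition ↑S ∧
        c₁ * (n : ℝ) ^ (3 - α) ≤ (tau ↑S : ℝ) ∧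
        (tau ↑S : ℝ) ≤ c₂ * (n : ℝ) ^ (3 - α) ∧
        ∀ q : ℝ × ℝ, (stabbedCount ↑S q : ℝ) ≤ C * (n : ℝ) ^ (3 - 2 * α) := by
  refine ⟨1 / 1024, 860416, 13766656, by norm_num, by norm_num, by norm_num, 8, fun n hn => ?_⟩
  have hn1 : (1 : ℝ) ≤ n := by exact_mod_cast (by omega : 1 ≤ n)
  have hn0 : (0 : ℝ) < n := one_pos.trans_le hn1
  have hscale : (n : ℝ) ^ α ≤ n := by
    simpa only [Real.rpow_one] using Real.rpow_le_rpow_of_exponent_le hn1 hα1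
  have htau : (n : ℝ) ^ (3 - α) = n ^ 3 / n ^ α := by
    rw [Real.rpow_sub hn0, Real.rpow_ofNat]
  have hstab : (n : ℝ) ^ (3 - 2 * α) = n ^ 3 / (n ^ α) ^ 2 := by
    rw [Real.rpow_sub hn0, Real.rpow_ofNat, mul_comm, Real.rpow_mul hn0.le, Real.rpow_ofNat]
  rw [htau, hstab]
  exact exists_finset_tau_stabbedCount_le_of_scale hn (Real.one_le_rpow hn1 hα0) hscale
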